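/- Let p be a prime and G a non-abelian p-group of order p^n such that G/G' is elementary abelian of order p^{n-1} and Z(G) has exponent p. Then |M(G)| = p^{(n-1)(n-2)/2 - 1} if and only if G is isomorphic to one of: Q_8 × (ℤ_2)^{n-3} (with p = 2), E_2 × (ℤ_p)^{n-3} (with p odd), or H × (ℤ_p)^{n-2m-1} where H is an extraspecial p-group of order p^{2m+1} with m ≥ 2. -/

import Mathlib

/-- The kernel of the canonical free presentation `FreeGroup G → G`. -/
def presentationKernel (G : Type u) [Group G] : Subgroup (FreeGroup G) :=
  (FreeGroup.lift (id : G → G)).ker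

/-- The Schur multiplier `M(G) = H₂(G, ℤ)` (second integral group homology) of a
group `G`, realised via Hopf's integral formula `H₂(G, ℤ) ≅ (R ⊓ [F, F]) / [F, R]`,
where `F = FreeGroup G` is the canonical free group surjecting onto `G` with
kernel `R`. -/
def SchurMultiplier (G : Type u) [Group G] : Type u :=
  ↥(presentationKernel G ⊓ commutator (FreeGroup G)) ⧸
    (⁅(⊤ : Subgroup (FreeGroup G)), presentationKernel G⁆.subgroupOf
      (presentationKernel G ⊓ commutator (FreeGroup G)))

/-- A finite `p`-group `H` is extraspecial if its center, derived subgroup and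
Frattini subgroup coincide and have order `p`. -/
def IsExtraspecial (p : ℕ) (H : Type*) [Group H] : Prop :=
  Subgroup.center H = commutator H ∧ Subgroup.center H = frattini H ∧
    Nat.card (Subgroup.center H) = p

/-- `H` is (isomorphic to) `E₂`, the extraspecial group of order `p^3` and
exponent `p^2`. -/
def IsE₂ (p : ℕ) (H : Type*) [Group H] : Prop :=
  IsExtraspecial p H ∧ Nat.card H = p ^ 3 ∧ Monoid.exponent H = p ^ 2

section Part1

open scoped commutatorElement IsMulCommutative

abbrev SMPair (d : ℕ) := (j : Fin d) × Fin j.val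

def SMPair.i {d : ℕ} (x : SMPair d) : Fin d := ⟨x.2.1, lt_trans x.2.2 x.1.2⟩

theorem SMPair.card (d : ℕ) : Fintype.card (SMPair d) = d * (d - 1) / 2 := by
  rw [Fintype.card_sigma]
  simp only [Fintype.card_fin]
  rw [Fin.sum_univ_eq_sum_range (fun i => i) d, Finset.sum_range_id]

@[ext] structure SMHE (p d : ℕ) where
  v : Fin d → ZMod p
  w : SMPair d → ZMod p

namespace SMHE
variable {p d : ℕ}

instance : Mul (SMHE p d) := ⟨fun a b => ⟨a.v + b.v, a.w + b.w + fun x => a.v x.i * b.v x.1⟩⟩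
instance : One (SMHE p d) := ⟨⟨0, 0⟩⟩
instance : Inv (SMHE p d) := ⟨fun a => ⟨-a.v, -a.w + fun x => a.v x.i * a.v x.1⟩⟩
@[simp] theorem mul_v (a b : SMHE p d) : (a * b).v = a.v + b.v := rfl
@[simp] theorem mul_w (a b : SMHE p d) :
  (a * b).w = a.w + b.w + fun x => a.v x.i * b.v x.1 := rfl
@[simp] theorem one_v : (1 : SMHE p d).v = 0 := rfl
@[simp] theorem one_w : (1 : SMHE p d).w = 0 := rfl
@[simp] theorem inv_v (a : SMHE p d) : (a⁻¹).v = -a.v := rfl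
@[simp] theorem inv_w (a : SMHE p d) : (a⁻¹).w = -a.w + fun x => a.v x.i * a.v x.1 := rfl

instance : Group (SMHE p d) := Group.ofLeftAxioms
  (by intro a b c; ext x <;> simp <;> ring)
  (by intro a; ext x <;> simp)
  (by intro a; ext x <;> simp)

def proj : SMHE p d →* Multiplicative (Fin d → ZMod p) where
  toFun a := Multiplicative.ofAdd a.v
  map_one' := rfl
  map_mul' _ _ := rfl

def incl : Multiplicative (SMPair d → ZMod p) →* SMHE p d where
  toFun a := ⟨0, a.toAdd⟩
  map_one' := rfl
  map_mul' _ _ := by ext <;> simp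

theorem comm_w (a b : SMHE p d) :
    ⁅a, b⁆ = ⟨0, fun x => a.v x.i * b.v x.1 - b.v x.i * a.v x.1⟩ := by
  ext x <;> simp [commutatorElement_def] <;> ring

end SMHE

theorem SM_top_of_basis {p d : ℕ} [NeZero p] {ι : Type*} [Fintype ι] [DecidableEq ι]
    (A : Subgroup (Multiplicative (ι → ZMod p)))
    (h : ∀ i, Multiplicative.ofAdd (Pi.single i 1 : ι → ZMod p) ∈ A) : A = ⊤ := by
  rw [eq_top_iff]
  rintro v -
  have : v = ∏ i, (Multiplicative.ofAdd (Pi.single i 1 : ι → ZMod p)) ^ (v.toAdd i).val := by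
    apply Multiplicative.toAdd.injective
    funext j
    rw [toAdd_prod, Finset.sum_apply]
    simp only [toAdd_pow, toAdd_ofAdd, Pi.smul_apply, Pi.single_apply]
    simp
  rw [this]
  exact Subgroup.prod_mem _ fun i _ => A.pow_mem (h i) _

theorem SM_comm_pow {L : Type*} [Group L] (p : ℕ) {x y : L}
    (h1 : ⁅x, y⁆ ∈ Subgroup.center L) (h2 : y ^ p ∈ Subgroup.center L) : ⁅x, y⁆ ^ p = 1 := by
  have e : x * y * x⁻¹ = ⁅x, y⁆ * y := by simp [commutatorElement_def]
  have h3 : (x * y * x⁻¹) ^ p = ⁅x, y⁆ ^ p * y ^ p := by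
    rw [e]; exact (show Commute ⁅x,y⁆ y from (Subgroup.mem_center_iff.1 h1 y).symm).mul_pow p
  rw [conj_pow, Subgroup.mem_center_iff.1 h2 x, mul_inv_cancel_right] at h3
  simpa using h3.symm

/-- upper bound -/
theorem SM_upper {p d : ℕ} [NeZero p] {L : Type*} [Group L]
    (g : L →* Multiplicative (Fin d → ZMod p)) (hg : Function.Surjective g)
    (hc : g.ker ≤ Subgroup.center L) :
    Finite (commutator L) ∧ Nat.card (commutator L) ≤ p ^ (d * (d - 1) / 2) := by
  choose e he using fun i : Fin d => hg (Multiplicative.ofAdd (Pi.single i 1))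
  have hcc : ∀ x y : L, ⁅x, y⁆ ∈ Subgroup.center L := fun x y => hc (by
    rw [MonoidHom.mem_ker, map_commutatorElement, commutatorElement_eq_one_iff_commute]
    exact Commute.all _ _)
  have hpp : ∀ x : L, x ^ p ∈ Subgroup.center L := fun x => hc (by
    rw [MonoidHom.mem_ker, map_pow]
    apply Multiplicative.toAdd.injective
    funext j
    simp)
  let c : SMPair d → Subgroup.center L := fun x => ⟨⁅e x.i, e x.1⁆, hcc _ _⟩
  have hcp : ∀ x, c x ^ p = 1 := fun x => Subtype.ext (SM_comm_pow p (hcc _ _) (hpp _))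
  let P0 : Subgroup (Subgroup.center L) := Subgroup.closure (Set.range c)
  let P : Subgroup L := P0.map (Subgroup.center L).subtype
  have hPc : P ≤ Subgroup.center L := by
    rintro _ ⟨x, -, rfl⟩; exact x.2
  have hPn : P.Normal := ⟨fun n hn g => by
    rw [Subgroup.mem_center_iff.1 (hPc hn) g]; simpa using hn⟩
  have hij : ∀ i j, ⁅e i, e j⁆ ∈ P := by
    have key : ∀ i j, i < j → ⁅e i, e j⁆ ∈ P := fun i j h =>
      ⟨c ⟨j, ⟨i.1, h⟩⟩, Subgroup.subset_closure ⟨_, rfl⟩, rfl⟩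
    intro i j
    rcases lt_trichotomy i j with h | h | h
    · exact key i j h
    · subst h; simp [P.one_mem]
    · rw [← commutatorElement_inv]; exact P.inv_mem (key j i h)
  let q := QuotientGroup.mk' P
  have hq : ∀ x y : L, Commute (q x) (q y) ↔ ⁅x, y⁆ ∈ P := fun x y => by
    rw [← commutatorElement_eq_one_iff_commute, ← map_commutatorElement]
    exact QuotientGroup.eq_one_iff _
  have gen : ∀ A : Subgroup L, g.ker ≤ A → (∀ i, e i ∈ A) → A = ⊤ := by
    intro A h1 h2
    have : A.map g = ⊤ := SM_top_of_basis (d := d) _ fun i => ⟨e i, h2 i, he i⟩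
    have h3 := Subgroup.comap_map_eq g A
    rw [this, Subgroup.comap_top, sup_eq_left.2 h1] at h3
    exact h3.symm
  have hcen : ∀ x ∈ g.ker, ∀ y, ⁅x, y⁆ ∈ P := fun x hx y => by
    have : ⁅x, y⁆ = 1 := commutatorElement_eq_one_iff_commute.2
      (Subgroup.mem_center_iff.1 (hc hx) y).symm
    rw [this]; exact P.one_mem
  have s1 : ∀ (i : Fin d) (y : L), ⁅y, e i⁆ ∈ P := by
    intro i
    have := gen ((Subgroup.centralizer {q (e i)}).comap q)
      (fun x hx => by
        rw [Subgroup.mem_comap, Subgroup.mem_centralizer_singleton_iff]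
        exact (hq _ _).2 (hcen x hx _))
      (fun j => by
        rw [Subgroup.mem_comap, Subgroup.mem_centralizer_singleton_iff]
        exact (hq _ _).2 (hij _ _))
    intro y
    have hy : y ∈ ((Subgroup.centralizer {q (e i)}).comap q) := by rw [this]; trivial
    rw [Subgroup.mem_comap, Subgroup.mem_centralizer_singleton_iff] at hy
    exact (hq _ _).1 hy
  have s2 : ∀ x y : L, ⁅x, y⁆ ∈ P := by
    intro x
    have := gen ((Subgroup.centralizer {q x}).comap q)
      (fun y hx => by
        rw [Subgroup.mem_comap, Subgroup.mem_centralizer_singleton_iff]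
        exact (hq _ _).2 (hcen y hx _))
      (fun j => by
        rw [Subgroup.mem_comap, Subgroup.mem_centralizer_singleton_iff]
        exact ((hq _ _).2 (s1 _ _)).symm)
    intro y
    have hy : y ∈ ((Subgroup.centralizer {q x}).comap q) := by rw [this]; trivial
    rw [Subgroup.mem_comap, Subgroup.mem_centralizer_singleton_iff] at hy
    exact (hq _ _).1 hy.symm
  have hle : commutator L ≤ P := Subgroup.commutator_le.2 fun x _ y _ => s2 x y
  let Θ : (SMPair d → ZMod p) → L := fun k => ((∏ x, c x ^ (k x).val : Subgroup.center L) : L)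
  have hsub : (commutator L : Set L) ⊆ Set.range Θ := by
    intro x hx
    obtain ⟨y, hy, rfl⟩ := hle hx
    obtain ⟨a, rfl⟩ := Subgroup.exists_of_mem_closure_range c y hy
    refine ⟨fun x => (a x : ZMod p), ?_⟩
    simp only [Θ, Subgroup.coe_subtype]
    congr 1
    refine Finset.prod_congr rfl fun x _ => ?_
    rw [← zpow_natCast, ZMod.val_intCast]
    conv_rhs => rw [← Int.emod_add_mul_ediv (a x) p]
    rw [zpow_add, zpow_mul, zpow_natCast, hcp, one_zpow, mul_one]
  have hfin : (Set.range Θ).Finite := Set.finite_range Θ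
  refine ⟨hfin.subset hsub, ?_⟩
  have h1 : Nat.card (commutator L) ≤ Nat.card (Set.range Θ) :=
    Nat.card_mono hfin hsub
  refine h1.trans ((Finite.card_range_le Θ).trans ?_)
  rw [Nat.card_eq_fintype_card, Fintype.card_fun, ZMod.card, SMPair.card]

theorem SM_relIndex {p d : ℕ} [NeZero p] {α : Type*}
    (f : FreeGroup α →* Multiplicative (Fin d → ZMod p)) (hf : Function.Surjective f) :
    (⁅(⊤ : Subgroup (FreeGroup α)), f.ker⁆).relIndex (commutator (FreeGroup α))
      = p ^ (d * (d - 1) / 2) := by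
  set N := ⁅(⊤ : Subgroup (FreeGroup α)), f.ker⁆ with hN
  have hNk : N ≤ f.ker := Subgroup.commutator_le_right _ _
  -- upper
  have up : N.relIndex (commutator (FreeGroup α)) ≠ 0 ∧
      N.relIndex (commutator (FreeGroup α)) ≤ p ^ (d * (d - 1) / 2) := by
    let g : FreeGroup α ⧸ N →* Multiplicative (Fin d → ZMod p) := QuotientGroup.lift N f hNk
    have hg : Function.Surjective g := fun v => by
      obtain ⟨x, rfl⟩ := hf v
      exact ⟨QuotientGroup.mk x, rfl⟩
    have hc : g.ker ≤ Subgroup.center _ := by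
      intro x hx
      obtain ⟨x, rfl⟩ := QuotientGroup.mk_surjective x
      rw [Subgroup.mem_center_iff]
      intro y
      obtain ⟨y, rfl⟩ := QuotientGroup.mk_surjective y
      apply (commutatorElement_eq_one_iff_mul_comm).1
      exact (QuotientGroup.eq_one_iff ⁅y, x⁆).2 (Subgroup.commutator_mem_commutator trivial hx)
    obtain ⟨h1, h2⟩ := SM_upper g hg hc
    have e : N.relIndex (commutator (FreeGroup α)) = Nat.card (commutator (FreeGroup α ⧸ N)) := by
      conv_lhs => rw [← QuotientGroup.ker_mk' N]
      rw [Subgroup.relIndex_ker, commutator_def, Subgroup.map_commutator,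
        Subgroup.map_top_of_surjective _ (QuotientGroup.mk'_surjective N), commutator_def]
    rw [e]
    exact ⟨Nat.card_ne_zero.2 ⟨⟨1⟩, h1⟩, h2⟩
  -- lower
  let ψ : FreeGroup α →* SMHE p d := FreeGroup.lift fun a => ⟨(f (FreeGroup.of a)).toAdd, 0⟩
  have hψ : ∀ x, (ψ x).v = (f x).toAdd := by
    have : SMHE.proj.comp ψ = f := by
      ext a
      simp [ψ, SMHE.proj]
    intro x
    rw [← this]; rfl
  have hNψ : N ≤ ψ.ker := by
    refine Subgroup.commutator_le.2 fun x _ y hy => ?_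
    have hy' : (ψ y).v = 0 := by rw [hψ, MonoidHom.mem_ker.1 hy]; rfl
    rw [MonoidHom.mem_ker, map_commutatorElement, SMHE.comm_w, hy']
    ext <;> simp
  have hcard : ψ.ker.relIndex (commutator (FreeGroup α)) = p ^ (d * (d - 1) / 2) := by
    rw [Subgroup.relIndex_ker]
    have : (commutator (FreeGroup α)).map ψ = (SMHE.incl (p := p) (d := d)).range := by
      apply le_antisymm
      · rw [Subgroup.map_le_iff_le_comap]
        refine Subgroup.commutator_le.2 fun x _ y _ => ?_
        rw [Subgroup.mem_comap, map_commutatorElement, SMHE.comm_w]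
        exact ⟨Multiplicative.ofAdd _, rfl⟩
      · have ht : ((commutator (FreeGroup α)).map ψ).comap (SMHE.incl (p := p) (d := d)) = ⊤ := by
          apply SM_top_of_basis (d := d)
          intro x
          obtain ⟨a, ha⟩ := hf (Multiplicative.ofAdd (Pi.single x.i 1))
          obtain ⟨b, hb⟩ := hf (Multiplicative.ofAdd (Pi.single x.1 1))
          refine ⟨⁅a, b⁆, Subgroup.commutator_mem_commutator trivial trivial, ?_⟩
          rw [map_commutatorElement, SMHE.comm_w, hψ, hψ, ha, hb]
          ext y
          · rfl
          · change _ = (Pi.single x 1 : SMPair d → ZMod p) y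
            have hx : x.i < x.1 := x.2.2
            have hy : y.i < y.1 := y.2.2
            simp only [toAdd_ofAdd, Pi.single_apply]
            have h1 : y = x ↔ (y.i = x.i ∧ y.1 = x.1) := by
              constructor
              · rintro rfl; exact ⟨rfl, rfl⟩
              · rintro ⟨h1, h2⟩
                obtain ⟨j, i⟩ := x
                obtain ⟨j', i'⟩ := y
                simp only at h2
                subst h2
                have : i' = i := by
                  have := congrArg Fin.val h1
                  exact Fin.ext this
                rw [this]
            have h2 : ¬ (y.i = x.1 ∧ y.1 = x.i) := by
              rintro ⟨h1, h2⟩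
              rw [h1, h2] at hy
              exact lt_asymm hx hy
            by_cases a1 : y.i = x.i <;> by_cases a2 : y.1 = x.1 <;> 
              by_cases a3 : y.i = x.1 <;> by_cases a4 : y.1 = x.i <;> simp_all
        rintro _ ⟨x, rfl⟩
        have : x ∈ ((commutator (FreeGroup α)).map ψ).comap (SMHE.incl (p := p) (d := d)) := by
          rw [ht]; trivial
        exact this
    rw [this]
    have hinj : Function.Injective (SMHE.incl (p := p) (d := d)) := fun a b h => by
      have := congrArg SMHE.w h
      exact this
    rw [← Nat.card_congr (MonoidHom.ofInjective hinj).toEquiv, Nat.card_eq_fintype_card]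
    have : Fintype.card (SMPair d → ZMod p) = p ^ (d * (d - 1) / 2) := by
      rw [Fintype.card_fun, ZMod.card, SMPair.card]
    rw [← this]
    exact Fintype.card_congr Multiplicative.toAdd
  have hd := Subgroup.relIndex_dvd_of_le_left (commutator (FreeGroup α)) hNψ
  rw [hcard] at hd
  exact le_antisymm up.2 (Nat.le_of_dvd (Nat.pos_of_ne_zero up.1) hd)

end Part1
section Part2
open scoped commutatorElement

theorem SM_elem {p d : ℕ} (hp : p.Prime) {A : Type*} [CommGroup A] (hA : Nat.card A = p ^ d)
    (hx : ∀ x : A, x ^ p = 1) : Nonempty (A ≃* Multiplicative (Fin d → ZMod p)) := by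
  haveI : Fact p.Prime := ⟨hp⟩
  letI : Module (ZMod p) (Additive A) := AddCommGroup.zmodModule (n := p) (fun x => hx x.toMul)
  haveI : Finite A := Nat.finite_of_card_ne_zero (by rw [hA]; exact pow_ne_zero _ hp.ne_zero)
  have h1 : Module.finrank (ZMod p) (Additive A) = d := by
    have := Module.natCard_eq_pow_finrank (K := ZMod p) (V := Additive A)
    rw [Nat.card_congr Additive.toMul, hA, Nat.card_zmod] at this
    exact (Nat.pow_right_injective hp.two_le this).symm
  let e := (Module.finBasisOfFinrankEq (ZMod p) (Additive A) h1).equivFun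
  exact ⟨(MulEquiv.toAdditiveLeft.symm e.toAddEquiv)⟩

theorem SM_compl {p : ℕ} (hp : p.Prime) {A : Type*} [CommGroup A]
    (hx : ∀ x : A, x ^ p = 1) (B : Subgroup A) : ∃ C : Subgroup A, IsCompl B C := by
  haveI : Fact p.Prime := ⟨hp⟩
  letI : Module (ZMod p) (Additive A) := AddCommGroup.zmodModule (n := p) (fun x => hx x.toMul)
  let e : Subgroup A ≃o Submodule (ZMod p) (Additive A) :=
    (Subgroup.toAddSubgroup).trans (AddSubgroup.toZModSubmodule p)
  obtain ⟨C, hC⟩ := exists_isCompl (e B)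
  refine ⟨e.symm C, ?_⟩
  have := (e.symm.isCompl_iff (x := e B) (y := C)).1 hC
  simpa using this

theorem SM_normal_central {p n : ℕ} (hp : p.Prime) {G : Type*} [Group G]
    (hG : Nat.card G = p ^ n) (N : Subgroup G) [N.Normal] (hN : Nat.card N = p) :
    N ≤ Subgroup.center G := by
  haveI : Fact p.Prime := ⟨hp⟩
  haveI : Finite G := Nat.finite_of_card_ne_zero (by rw [hG]; exact pow_ne_zero _ hp.ne_zero)
  have hP : IsPGroup p (ConjAct G) := IsPGroup.of_card (n := n) hG
  obtain ⟨b, hb, hne⟩ := hP.exists_fixed_point_of_prime_dvd_card_of_fixed_point N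
    (by rw [hN]) (a := 1) (fun g => by simp)
  have hbc : (b : G) ∈ Subgroup.center G := by
    rw [Subgroup.mem_center_iff]
    intro g
    have := congrArg Subtype.val (hb (ConjAct.toConjAct g))
    rw [ConjAct.Subgroup.val_conj_smul, ConjAct.toConjAct_smul] at this
    exact mul_inv_eq_iff_eq_mul.1 this
  have hz : Subgroup.zpowers b = ⊤ := zpowers_eq_top_of_prime_card hN hne.symm
  intro x hx
  have : (⟨x, hx⟩ : N) ∈ Subgroup.zpowers b := by rw [hz]; trivial
  obtain ⟨k, hk⟩ := this
  have : x = (b : G) ^ k := by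
    have := congrArg Subtype.val hk
    simpa using this.symm
  rw [this]
  exact Subgroup.zpow_mem _ hbc k

structure SMHyp (p : ℕ) (G : Type*) [Group G] : Prop where
  fin : Finite G
  card : Nat.card (commutator G) = p
  central : commutator G ≤ Subgroup.center G
  pow : ∀ x : G, x ^ p ∈ commutator G
  cen : ∀ z ∈ Subgroup.center G, z ^ p = 1

theorem SM_hyp {p n : ℕ} (hp : p.Prime)
    {G : Type*} [Group G] (hG : Nat.card G = p ^ n)
    (hnab : ∃ a b : G, a * b ≠ b * a)
    (habCard : Nat.card (Abelianization G) = p ^ (n - 1))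
    (habElem : ∀ x : Abelianization G, x ^ p = 1)
    (hZexp : ∀ z ∈ Subgroup.center G, z ^ p = 1) : SMHyp p G := by
  haveI : Finite G := Nat.finite_of_card_ne_zero (by rw [hG]; exact pow_ne_zero _ hp.ne_zero)
  have hn : n ≠ 0 := by
    rintro rfl
    obtain ⟨a, b, h⟩ := hnab
    haveI := (Nat.card_eq_one_iff_unique.1 (by simpa using hG)).1
    exact h (Subsingleton.elim _ _)
  have hc : Nat.card (commutator G) = p := by
    have := Subgroup.card_eq_card_quotient_mul_card_subgroup (commutator G)
    rw [hG] at this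
    change _ = Nat.card (Abelianization G) * _ at this
    rw [habCard] at this
    have h2 : p ^ n = p ^ (n - 1) * p := by
      rw [← pow_succ]; congr 1; omega
    rw [h2] at this
    exact (Nat.eq_of_mul_eq_mul_left (pow_pos hp.pos _) this).symm
  refine ⟨‹_›, hc, SM_normal_central hp hG _ hc, ?_, hZexp⟩
  intro x
  have := habElem (Abelianization.of x)
  rw [← map_pow] at this
  exact (QuotientGroup.eq_one_iff (N := commutator G) _).1 this

def SMCond (G : Type u) [Group G] : Prop :=
  ⁅(⊤ : Subgroup (FreeGroup G)), commutator (FreeGroup G)⁆ ≤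
    ⁅(⊤ : Subgroup (FreeGroup G)), presentationKernel G⁆

instance SM_pk_normal (G : Type u) [Group G] : (presentationKernel G).Normal := by
  unfold presentationKernel; infer_instance

theorem SM_iff {p n : ℕ} (hp : p.Prime)
    {G : Type u} [Group G] (h : SMHyp p G)
    (habCard : Nat.card (Abelianization G) = p ^ (n - 1))
    (habElem : ∀ x : Abelianization G, x ^ p = 1) :
    Nat.card (SchurMultiplier G) = p ^ ((n - 1) * (n - 2) / 2 - 1) ↔ SMCond G := by
  haveI : NeZero p := ⟨hp.ne_zero⟩
  obtain ⟨e⟩ := SM_elem hp habCard habElem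
  let π : FreeGroup G →* G := FreeGroup.lift (id : G → G)
  have hπ : Function.Surjective π := fun g => ⟨FreeGroup.of g, by simp [π]⟩
  set R := presentationKernel G with hR
  have hRπ : R = π.ker := rfl
  let f : FreeGroup G →* Multiplicative (Fin (n - 1) → ZMod p) :=
    e.toMonoidHom.comp (Abelianization.of.comp π)
  have hf : Function.Surjective f := by
    intro v
    obtain ⟨a, ha⟩ := e.surjective v
    obtain ⟨g, hg⟩ := QuotientGroup.mk_surjective (s := commutator G) a
    obtain ⟨x, hx⟩ := hπ g
    refine ⟨x, ?_⟩
    change e (Abelianization.of (π x)) = v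
    rw [hx, ← ha]
    exact congrArg e hg
  have hfk : ∀ x, x ∈ f.ker ↔ π x ∈ commutator G := by
    intro x
    rw [MonoidHom.mem_ker]
    change e (Abelianization.of (π x)) = 1 ↔ _
    rw [MulEquiv.map_eq_one_iff]
    exact QuotientGroup.eq_one_iff (N := commutator G) _
  have hmap : (commutator (FreeGroup G)).map π = commutator G := by
    rw [commutator_def, Subgroup.map_commutator, Subgroup.map_top_of_surjective _ hπ,
      commutator_def]
  set F' := commutator (FreeGroup G) with hF'
  set S := f.ker with hS
  have hRS : R ≤ S := fun x hx => by
    rw [hfk]; rw [hRπ, MonoidHom.mem_ker] at hx; rw [hx]; exact one_mem _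
  have hF'S : F' ≤ S := fun x hx => by
    rw [hfk, ← hmap]; exact ⟨x, hx, rfl⟩
  have hSsup : S ≤ R ⊔ F' := by
    intro x hx
    rw [hfk, ← hmap] at hx
    obtain ⟨y, hy, hxy⟩ := hx
    have : x * y⁻¹ ∈ R := by
      rw [hRπ, MonoidHom.mem_ker, map_mul, map_inv, hxy, mul_inv_cancel]
    have h2 := Subgroup.mul_mem_sup this hy
    simpa using h2
  have i1 : ⁅(⊤ : Subgroup (FreeGroup G)), S⁆.relIndex F' = p ^ ((n - 1) * (n - 2) / 2) := by
    have := SM_relIndex f hf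
    rwa [Nat.sub_sub] at this
  have hSR : ⁅(⊤ : Subgroup (FreeGroup G)), S⁆ ≤ R ⊓ F' := by
    refine Subgroup.commutator_le.2 fun x _ y hy => ⟨?_, ?_⟩
    · change ⁅x, y⁆ ∈ π.ker
      rw [MonoidHom.mem_ker, map_commutatorElement, commutatorElement_eq_one_iff_mul_comm]
      exact Subgroup.mem_center_iff.1 (h.central ((hfk _).1 hy)) _
    · exact Subgroup.commutator_mem_commutator trivial trivial
  have hRR : ⁅(⊤ : Subgroup (FreeGroup G)), R⁆ ≤ ⁅(⊤ : Subgroup (FreeGroup G)), S⁆ :=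
    Subgroup.commutator_mono le_rfl hRS
  have i2 : (R ⊓ F').relIndex F' = p := by
    rw [Subgroup.inf_relIndex_right, hRπ, Subgroup.relIndex_ker, hmap, h.card]
  have i3 := Subgroup.relIndex_mul_relIndex _ _ _ hSR (inf_le_right : R ⊓ F' ≤ F')
  rw [i1, i2] at i3
  have i4 := Subgroup.relIndex_mul_relIndex _ _ _ hRR hSR
  have hcard : Nat.card (SchurMultiplier G) =
    ⁅(⊤ : Subgroup (FreeGroup G)), R⁆.relIndex (R ⊓ F') := rfl
  have hN : (n - 1) * (n - 2) / 2 ≠ 0 := by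
    intro h0
    rw [h0, pow_zero] at i3
    exact hp.one_lt.ne' (Nat.eq_one_of_mul_eq_one_left i3)
  have i5 : ⁅(⊤ : Subgroup (FreeGroup G)), S⁆.relIndex (R ⊓ F') =
      p ^ ((n - 1) * (n - 2) / 2 - 1) := by
    obtain ⟨N, hN'⟩ := Nat.exists_eq_succ_of_ne_zero hN
    rw [hN'] at i3 ⊢
    rw [Nat.succ_eq_add_one, pow_succ] at i3
    exact Nat.eq_of_mul_eq_mul_right hp.pos i3
  rw [hcard, ← i4, i5]
  have hpos : 0 < p ^ ((n - 1) * (n - 2) / 2 - 1) := pow_pos hp.pos _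
  rw [Nat.mul_eq_right hpos.ne', Subgroup.relIndex_eq_one]
  constructor
  · intro hh
    exact (Subgroup.commutator_mono le_rfl hF'S).trans hh
  · intro hh
    refine Subgroup.commutator_le.2 fun x _ y hy => ?_
    have key : ∀ y, y ∈ (Subgroup.center (FreeGroup G ⧸ ⁅(⊤ : Subgroup (FreeGroup G)), R⁆)).comap
        (QuotientGroup.mk' _) ↔ ∀ x : FreeGroup G, ⁅x, y⁆ ∈ ⁅(⊤ : Subgroup (FreeGroup G)), R⁆ := by
      intro y
      rw [Subgroup.mem_comap, Subgroup.mem_center_iff, (QuotientGroup.mk'_surjective _).forall]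
      refine forall_congr' fun x => ?_
      rw [← commutatorElement_eq_one_iff_mul_comm, ← map_commutatorElement]
      exact QuotientGroup.eq_one_iff _
    have h1 : R ⊔ F' ≤ (Subgroup.center (FreeGroup G ⧸ ⁅(⊤ : Subgroup (FreeGroup G)), R⁆)).comap
        (QuotientGroup.mk' _) := by
      refine sup_le (fun y hy => ?_) (fun y hy => ?_)
      · exact (key y).2 fun x => Subgroup.commutator_mem_commutator trivial hy
      · exact (key y).2 fun x => hh (Subgroup.commutator_mem_commutator trivial hy)
    exact (key y).1 (h1 (hSsup hy)) x

/-- sufficient criterion -/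
theorem SM_cond_of {p : ℕ} (hp : p.Prime) {G : Type u} [Group G] (h : SMHyp p G)
    (A : Set G) (hA : ∀ w ∈ A, w ^ p ≠ 1 ∨ ∃ x y, x * y ≠ y * x ∧ w * x = x * w ∧ w * y = y * w)
    (hgen : ∀ w, w ∈ A ∨ ∃ x ∈ A, w * x ∈ A) : SMCond G := by
  haveI : Fact p.Prime := ⟨hp⟩
  let N := ⁅(⊤ : Subgroup (FreeGroup G)), presentationKernel G⁆
  let K := FreeGroup G ⧸ N
  have hNR : N ≤ presentationKernel G := Subgroup.commutator_le_right _ _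
  let π : K →* G := QuotientGroup.lift N (FreeGroup.lift (id : G → G)) hNR
  have hπ : Function.Surjective π := fun g => ⟨QuotientGroup.mk (FreeGroup.of g), by
    change FreeGroup.lift id (FreeGroup.of g) = g
    simp⟩
  have hker : ∀ x : K, π x = 1 → ∀ y, y * x = x * y := by
    intro x hx y
    obtain ⟨x, rfl⟩ := QuotientGroup.mk_surjective x
    obtain ⟨y, rfl⟩ := QuotientGroup.mk_surjective y
    apply (commutatorElement_eq_one_iff_mul_comm).1
    exact (QuotientGroup.eq_one_iff ⁅y, x⁆).2 (Subgroup.commutator_mem_commutator trivial hx)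
  -- any element of commutator
  have hpre : ∀ (u : K), π u ∈ commutator G → π u ≠ 1 → ∀ w, w * u = u * w →
      ∀ c : K, π c ∈ commutator G → w * c = c * w := by
    intro u hu hu1 w hwu c hc
    have hz : Subgroup.zpowers (⟨π u, hu⟩ : commutator G) = ⊤ :=
      zpowers_eq_top_of_prime_card h.card (fun h => hu1 (congrArg Subtype.val h))
    have : (⟨π c, hc⟩ : commutator G) ∈ Subgroup.zpowers (⟨π u, hu⟩ : commutator G) := by
      rw [hz]; trivial
    obtain ⟨k, hk⟩ := this
    have hk' : π u ^ k = π c := by simpa using congrArg Subtype.val hk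
    have hr : π (u ^ (-k) * c) = 1 := by
      rw [map_mul, map_zpow, ← hk', ← zpow_add]; simp
    have hr' := hker _ hr
    have e : c = u ^ k * (u ^ (-k) * c) := by rw [← mul_assoc, ← zpow_add]; simp
    rw [e]
    have c1 : Commute w (u ^ k) := Commute.zpow_right hwu k
    have c2 : Commute w (u ^ (-k) * c) := hr' w
    exact c1.mul_right c2
  have hcen : ∀ w : K, π w ∈ A → ∀ c : K, π c ∈ commutator G → w * c = c * w := by
    intro w hw
    rcases hA _ hw with h1 | ⟨x, y, hxy, hx, hy⟩
    · refine hpre (w ^ p) ?_ ?_ w ?_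
      · rw [map_pow]; exact h.pow _
      · rw [map_pow]; exact h1
      · exact ((Commute.refl w).pow_right p)
    · obtain ⟨x, rfl⟩ := hπ x
      obtain ⟨y, rfl⟩ := hπ y
      refine hpre ⁅x, y⁆ ?_ ?_ w ?_
      · rw [map_commutatorElement]; exact Subgroup.commutator_mem_commutator trivial trivial
      · rw [map_commutatorElement, Ne, commutatorElement_eq_one_iff_mul_comm]; exact hxy
      · have c1 : π ⁅w, x⁆ = 1 := by
          rw [map_commutatorElement, commutatorElement_eq_one_iff_mul_comm]; exact hx
        have c2 : π ⁅w, y⁆ = 1 := by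
          rw [map_commutatorElement, commutatorElement_eq_one_iff_mul_comm]; exact hy
        have d1 := hker _ c1
        have d2 := hker _ c2
        have e1 : MulAut.conj w x = ⁅w, x⁆ * x := conj_eq_commutatorElement_mul
        have e2 : MulAut.conj w y = ⁅w, y⁆ * y := conj_eq_commutatorElement_mul
        have e3 : MulAut.conj w ⁅x, y⁆ = ⁅x, y⁆ := by
          rw [map_commutatorElement, e1, e2]
          generalize ⁅w, x⁆ = r at d1
          generalize ⁅w, y⁆ = s at d2
          rw [commutatorElement_def, commutatorElement_def]
          have r1 : ∀ t, (r * t) * r⁻¹ = t := fun t => by rw [← d1]; simp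
          calc r * x * (s * y) * (r * x)⁻¹ * (s * y)⁻¹
              = r * (x * (s * y) * x⁻¹) * r⁻¹ * (s * y)⁻¹ := by group
            _ = x * (s * y) * x⁻¹ * (s * y)⁻¹ := by rw [r1]
            _ = (x * s) * y * x⁻¹ * y⁻¹ * s⁻¹ := by group
            _ = s * (x * y * x⁻¹ * y⁻¹) * s⁻¹ := by rw [d2 x]; group
            _ = x * y * x⁻¹ * y⁻¹ := by rw [← d2]; group
        rw [MulAut.conj_apply] at e3
        exact mul_inv_eq_iff_eq_mul.1 e3
  have hall : ∀ w c : K, π c ∈ commutator G → w * c = c * w := by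
    intro w c hc
    rcases hgen (π w) with hw | ⟨x, hx, hwx⟩
    · exact hcen w hw c hc
    · obtain ⟨x, rfl⟩ := hπ x
      have c1 : Commute x c := hcen x hx c hc
      have c2 : Commute (w * x) c := hcen (w * x) (by rwa [map_mul]) c hc
      have : Commute w c := by simpa using c2.mul_left c1.inv_left
      exact this
  refine Subgroup.commutator_le.2 fun x _ y hy => ?_
  refine (QuotientGroup.eq_one_iff (N := N) _).1 ?_
  change QuotientGroup.mk' N ⁅x, y⁆ = 1
  rw [map_commutatorElement, commutatorElement_eq_one_iff_mul_comm]
  refine hall _ _ ?_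
  have : (commutator (FreeGroup G)).map (FreeGroup.lift (id : G → G)) ≤ commutator G := by
    rw [commutator_def, Subgroup.map_commutator]
    exact Subgroup.commutator_mono le_top le_top
  exact this ⟨y, hy, rfl⟩

/-- necessary -/
theorem SM_not_cond {G : Type u} [Group G] {H E : Type*} [Group H] [Group E]
    (φ : G →* H) (hφ : Function.Surjective φ) (ε : E →* H) (hε : Function.Surjective ε)
    (hk : ε.ker ≤ Subgroup.center E) (a b c : E) (hne : ⁅a, ⁅b, c⁆⁆ ≠ 1) : ¬ SMCond G := by
  intro hc
  choose s hs using hε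
  let π : FreeGroup G →* G := FreeGroup.lift (id : G → G)
  have hπ : Function.Surjective π := fun g => ⟨FreeGroup.of g, by simp [π]⟩
  let ψ : FreeGroup G →* E := FreeGroup.lift (fun g => s (φ g))
  have hψ : ∀ x, ε (ψ x) = φ (π x) := by
    have : ε.comp ψ = φ.comp π := by
      ext g; simp [ψ, π, hs]
    intro x
    exact DFunLike.congr_fun this x
  have h1 : ⁅(⊤ : Subgroup (FreeGroup G)), presentationKernel G⁆ ≤ ψ.ker := by
    refine Subgroup.commutator_le.2 fun x _ y hy => ?_
    rw [MonoidHom.mem_ker, map_commutatorElement, commutatorElement_eq_one_iff_mul_comm]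
    refine Subgroup.mem_center_iff.1 (hk ?_) _
    rw [MonoidHom.mem_ker, hψ]
    have : π y = 1 := hy
    rw [this, map_one]
  have lift : ∀ e : E, ∃ x, ∃ r ∈ Subgroup.center E, e = ψ x * r := by
    intro e
    obtain ⟨g, hg⟩ := hφ (ε e)
    obtain ⟨x, hx⟩ := hπ g
    refine ⟨x, (ψ x)⁻¹ * e, hk ?_, by simp⟩
    rw [MonoidHom.mem_ker, map_mul, map_inv, hψ, hx, hg, inv_mul_cancel]
  obtain ⟨x, r, hr, rfl⟩ := lift a
  obtain ⟨y, s', hs', rfl⟩ := lift b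
  obtain ⟨z, t, ht, rfl⟩ := lift c
  apply hne
  have e1 : ∀ u v r : E, r ∈ Subgroup.center E → ⁅u * r, v⁆ = ⁅u, v⁆ := by
    intro u v r hr
    have := Subgroup.mem_center_iff.1 hr
    rw [commutatorElement_def, commutatorElement_def, mul_assoc u r v, ← this v]
    group
  have e2 : ∀ u v r : E, r ∈ Subgroup.center E → ⁅u, v * r⁆ = ⁅u, v⁆ := by
    intro u v r hr
    rw [← commutatorElement_inv, e1 _ _ _ hr, commutatorElement_inv]
  rw [e1 _ _ _ hr, e1 _ _ _ hs', e2 _ _ _ ht, ← map_commutatorElement, ← map_commutatorElement]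
  exact h1 (hc (Subgroup.commutator_mem_commutator trivial
    (Subgroup.commutator_mem_commutator trivial trivial)))

end Part2
section Part3
open scoped commutatorElement

theorem SM_nonab {p : ℕ} (hp : p.Prime) {G : Type*} [Group G] (h : SMHyp p G) :
    ∃ a b : G, a * b ≠ b * a := by
  by_contra hcon
  push Not at hcon
  have : commutator G = ⊥ := by
    rw [eq_bot_iff]
    refine Subgroup.commutator_le.2 fun x _ y _ => ?_
    rw [Subgroup.mem_bot, commutatorElement_eq_one_iff_mul_comm]
    exact hcon x y
  have h1 := h.card
  rw [this, Subgroup.card_bot] at h1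
  exact hp.one_lt.ne h1

theorem SM_caseQ {G : Type u} [Group G] (h : SMHyp 2 G) {k : ℕ}
    (e : G ≃* QuaternionGroup 2 × (Fin k → Multiplicative (ZMod 2))) : SMCond G := by
  obtain ⟨a, b, hab⟩ := SM_nonab Nat.prime_two h
  have hQ : ∀ q : QuaternionGroup 2, q ^ 2 = 1 → ∀ r, q * r = r * q := by decide
  refine SM_cond_of Nat.prime_two h Set.univ (fun w _ => ?_) (fun w => Or.inl trivial)
  by_cases hw : w ^ 2 = 1
  · right
    have h1 : (e w).1 ^ 2 = 1 := by
      have : (e (w ^ 2)).1 = 1 := by rw [hw, map_one]; rfl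
      rwa [map_pow] at this
    have hc : ∀ x, w * x = x * w := by
      intro x
      apply e.injective
      rw [map_mul, map_mul]
      exact Prod.ext (hQ _ h1 _) (mul_comm _ _)
    exact ⟨a, b, hab, hc a, hc b⟩
  · exact Or.inl hw

theorem SM_mul_pow {G : Type*} [Group G] (hc : commutator G ≤ Subgroup.center G) (w x : G) (n : ℕ) :
    (w * x) ^ n = w ^ n * x ^ n * ⁅x, w⁆ ^ (n.choose 2) := by
  have hz : ∀ g, g * ⁅x, w⁆ = ⁅x, w⁆ * g := Subgroup.mem_center_iff.1
    (hc (Subgroup.commutator_mem_commutator trivial trivial))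
  have hxw : x * w = w * x * ⁅x, w⁆ := by
    rw [hz, commutatorElement_def]; group
  generalize ⁅x, w⁆ = z at hz hxw
  have hzc : ∀ g, Commute g z := hz
  have h1 : ∀ n : ℕ, x ^ n * w = w * x ^ n * z ^ n := by
    intro n
    induction n with
    | zero => simp
    | succ n ih =>
      rw [pow_succ, mul_assoc, hxw, ← mul_assoc, ← mul_assoc, ih, pow_succ z]
      have := ((hzc x).pow_right n).eq
      rw [mul_assoc (w * x ^ n), ← this]
      group
  induction n with
  | zero => simp
  | succ n ih =>
    rw [pow_succ, ih, Nat.choose_succ_succ' n 1, Nat.choose_one_right, pow_add]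
    have c1 := ((hzc w).pow_right (n.choose 2)).eq
    have c2 := ((hzc x).pow_right (n.choose 2)).eq
    have c3 := ((hzc x).pow_right n).eq
    calc w ^ n * x ^ n * z ^ n.choose 2 * (w * x)
        = w ^ n * x ^ n * (z ^ n.choose 2 * w) * x := by group
      _ = w ^ n * (x ^ n * w) * (z ^ n.choose 2 * x) := by rw [← c1]; group
      _ = w ^ n * (w * x ^ n * z ^ n) * (x * z ^ n.choose 2) := by rw [h1, ← c2]
      _ = w ^ n * w * x ^ n * (z ^ n * x) * z ^ n.choose 2 := by group
      _ = w ^ (n + 1) * x ^ (n + 1) * (z ^ n * z ^ n.choose 2) := by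
          rw [← c3, pow_succ, pow_succ]; group
      _ = _ := by rw [pow_succ w, pow_one, pow_add z]

theorem SM_comm_pow_one {p : ℕ} {G : Type*} [Group G] (h : SMHyp p G) :
    ∀ z ∈ commutator G, z ^ p = 1 := fun z hz => h.cen z (h.central hz)

theorem SM_mul_pow_odd {p : ℕ} (hodd : Odd p) {G : Type*} [Group G] (h : SMHyp p G)
    (w x : G) : (w * x) ^ p = w ^ p * x ^ p := by
  rw [SM_mul_pow h.central]
  obtain ⟨k, hk⟩ := hodd
  have : p.choose 2 = p * k := by
    rw [Nat.choose_two_right, hk, Nat.add_sub_cancel, mul_comm 2 k, ← mul_assoc]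
    exact Nat.mul_div_cancel _ (by norm_num)
  rw [this, pow_mul, SM_comm_pow_one h _ (Subgroup.commutator_mem_commutator trivial trivial),
    one_pow, mul_one]

theorem SM_caseE {p : ℕ} (hp : p.Prime) (hodd : Odd p) {G : Type u} [Group G] (h : SMHyp p G)
    (hx : ∃ x : G, x ^ p ≠ 1) : SMCond G := by
  obtain ⟨x, hx⟩ := hx
  refine SM_cond_of hp h {w | w ^ p ≠ 1} (fun w hw => Or.inl hw) (fun w => ?_)
  by_cases hw : w ^ p = 1
  · right
    refine ⟨x, hx, ?_⟩
    change (w * x) ^ p ≠ 1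
    rw [SM_mul_pow_odd hodd h, hw, one_mul]
    exact hx
  · exact Or.inl hw

def SMdel {p : ℕ} {G : Type*} [Group G] (h : SMHyp p G) (w : G) : G →* commutator G where
  toFun g := ⟨⁅g, w⁆, Subgroup.commutator_mem_commutator trivial trivial⟩
  map_one' := Subtype.ext (by simp)
  map_mul' a b := by
    apply Subtype.ext
    change ⁅a * b, w⁆ = ⁅a, w⁆ * ⁅b, w⁆
    have hz : ∀ g, g * ⁅b, w⁆ = ⁅b, w⁆ * g := Subgroup.mem_center_iff.1
      (h.central (Subgroup.commutator_mem_commutator trivial trivial))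
    rw [commutatorElement_def (a * b)]
    calc a * b * w * (a * b)⁻¹ * w⁻¹ = a * ⁅b, w⁆ * (w * a⁻¹ * w⁻¹) := by
            rw [commutatorElement_def]; group
      _ = ⁅b, w⁆ * ⁅a, w⁆ := by rw [hz, commutatorElement_def a]; group
      _ = _ := by rw [hz]

theorem SMdel_eq_one {p : ℕ} {G : Type*} [Group G] (h : SMHyp p G) (w g : G) :
    SMdel h w g = 1 ↔ g * w = w * g := by
  rw [← commutatorElement_eq_one_iff_mul_comm]
  exact ⟨fun h => congrArg Subtype.val h, fun h => Subtype.ext h⟩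

theorem SM_small_center {p : ℕ} (hp : p.Prime) {G : Type*} [Group G] (h : SMHyp p G) (w : G)
    (hw : ∀ x y, w * x = x * w → w * y = y * w → x * y = y * x) :
    (Subgroup.center G).index ≤ p * p := by
  haveI := h.fin
  have hidx : ∀ w, (SMdel h w).ker.index ∣ p := fun w => by
    rw [Subgroup.index_ker]
    exact (Subgroup.card_subgroup_dvd_card _).trans (dvd_of_eq h.card)
  have hidx' : ∀ w, (SMdel h w).ker.index ≤ p := fun w => Nat.le_of_dvd hp.pos (hidx w)
  obtain ⟨a, b, hab⟩ := SM_nonab hp h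
  have hmem : ∀ w g, g ∈ (SMdel h w).ker ↔ g * w = w * g := fun w g => by
    rw [MonoidHom.mem_ker, SMdel_eq_one]
  set A := (SMdel h w).ker with hA
  have hAcomm : ∀ x ∈ A, ∀ y ∈ A, x * y = y * x := fun x hx y hy =>
    hw x y ((hmem _ _).1 hx).symm ((hmem _ _).1 hy).symm
  obtain ⟨y, hy⟩ : ∃ y, y ∉ A := by
    by_contra hcon
    push Not at hcon
    exact hab (hAcomm a (hcon a) b (hcon b))
  have htop : A ⊔ Subgroup.zpowers y = ⊤ := by
    have h1 : A.relIndex (A ⊔ Subgroup.zpowers y) * (A ⊔ Subgroup.zpowers y).index = A.index :=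
      Subgroup.relIndex_mul_index le_sup_left
    have h2 : A.relIndex (A ⊔ Subgroup.zpowers y) ≠ 1 := by
      rw [Ne, Subgroup.relIndex_eq_one]
      intro hle
      exact hy (hle (Subgroup.mem_sup_right (Subgroup.mem_zpowers y)))
    have h3 := hidx w
    rw [← hA, ← h1] at h3
    have h4 : A.relIndex (A ⊔ Subgroup.zpowers y) = p :=
      ((Nat.dvd_prime hp).1 ((Dvd.intro _ rfl).trans h3)).resolve_left h2
    rw [h4] at h3
    have : (A ⊔ Subgroup.zpowers y).index = 1 := by
      have := Nat.le_of_dvd hp.pos h3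
      have h0 : (A ⊔ Subgroup.zpowers y).index ≠ 0 := Subgroup.index_ne_zero_of_finite
      have := hp.pos
      by_contra hne
      have : 2 ≤ (A ⊔ Subgroup.zpowers y).index := by omega
      nlinarith
    exact Subgroup.index_eq_one.1 this
  have hle : A ⊓ (SMdel h y).ker ≤ Subgroup.center G := by
    rintro z ⟨hz1, hz2⟩
    have : (A ⊔ Subgroup.zpowers y) ≤ Subgroup.centralizer {z} := by
      refine sup_le (fun x hx => ?_) ?_
      · rw [Subgroup.mem_centralizer_singleton_iff]; exact hAcomm x hx z hz1
      · rw [Subgroup.zpowers_le, Subgroup.mem_centralizer_singleton_iff]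
        exact ((hmem _ _).1 hz2).symm
    rw [htop] at this
    rw [Subgroup.mem_center_iff]
    intro g
    exact Subgroup.mem_centralizer_singleton_iff.1 (this (Subgroup.mem_top g))
  calc (Subgroup.center G).index ≤ (A ⊓ (SMdel h y).ker).index := 
        Nat.le_of_dvd (Nat.pos_of_ne_zero Subgroup.index_ne_zero_of_finite)
          (Subgroup.index_dvd_of_le hle)
    _ ≤ A.index * (SMdel h y).ker.index := Subgroup.index_inf_le
    _ ≤ p * p := Nat.mul_le_mul (hidx' _) (hidx' _)

theorem SM_caseBig {p : ℕ} (hp : p.Prime) {G : Type u} [Group G] (h : SMHyp p G)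
    (hi : p * p < (Subgroup.center G).index) : SMCond G := by
  refine SM_cond_of hp h Set.univ (fun w _ => ?_) (fun w => Or.inl trivial)
  right
  by_contra hcon
  push Not at hcon
  refine absurd (SM_small_center hp h w fun x y hx hy => ?_) (not_le.2 hi)
  by_contra hxy
  exact hcon x y hxy hx hy

theorem SM_even {p : ℕ} (hp : p.Prime) {G : Type*} [Group G] (h : SMHyp p G) (N : ℕ) :
    ∀ C : Subgroup G, Nat.card C ≤ N →
    ∃ m, Nat.card C = p ^ (2 * m) * Nat.card (C ⊓ Subgroup.centralizer (C : Set G) : Subgroup G) := by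
  haveI := h.fin
  haveI : Fact p.Prime := ⟨hp⟩
  induction N with
  | zero =>
    intro C hC
    have : 0 < Nat.card C := Nat.card_pos
    omega
  | succ N ih =>
    intro C hC
    by_cases hab : ∃ a ∈ C, ∃ b ∈ C, a * b ≠ b * a
    swap
    · push Not at hab
      refine ⟨0, ?_⟩
      rw [mul_zero, pow_zero, one_mul]
      have : C ⊓ Subgroup.centralizer (C : Set G) = C := by
        rw [inf_eq_left]
        intro x hx
        rw [Subgroup.mem_centralizer_iff]
        intro y hy
        exact hab y hy x hx
      rw [this]
    obtain ⟨a, ha, b, hb, hab⟩ := hab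
    let δ : G →* commutator G × commutator G := (SMdel h a).prod (SMdel h b)
    have hδ : ∀ g, δ g = 1 ↔ g * a = a * g ∧ g * b = b * g := by
      intro g
      rw [← SMdel_eq_one h, ← SMdel_eq_one h]
      exact Prod.ext_iff
    let C' := δ.ker ⊓ C
    have hcyc : ∀ u : commutator G, u ≠ 1 → ∀ v, ∃ k : ℤ, u ^ k = v := by
      intro u hu v
      have hz : Subgroup.zpowers u = ⊤ := zpowers_eq_top_of_prime_card h.card hu
      have : v ∈ Subgroup.zpowers u := by rw [hz]; trivial
      exact this
    have hu1 : SMdel h a b ≠ 1 := fun hh => hab ((SMdel_eq_one h a b).1 hh).symm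
    have hu2 : SMdel h b a ≠ 1 := fun hh => hab ((SMdel_eq_one h b a).1 hh)
    have haa : SMdel h a a = 1 := (SMdel_eq_one h a a).2 rfl
    have hbb : SMdel h b b = 1 := (SMdel_eq_one h b b).2 rfl
    have hsur : ∀ v, ∃ i j : ℤ, δ (b ^ i * a ^ j) = v := by
      rintro ⟨s, t⟩
      obtain ⟨i, hi⟩ := hcyc _ hu1 s
      obtain ⟨j, hj⟩ := hcyc _ hu2 t
      refine ⟨i, j, Prod.ext ?_ ?_⟩
      · change SMdel h a (b ^ i * a ^ j) = s
        rw [map_mul, map_zpow, map_zpow, haa, hi]; simp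
      · change SMdel h b (b ^ i * a ^ j) = t
        rw [map_mul, map_zpow, map_zpow, hbb, hj]; simp
    have hmap : C.map δ = ⊤ := by
      rw [eq_top_iff]
      rintro v -
      obtain ⟨i, j, hij⟩ := hsur v
      exact ⟨_, C.mul_mem (C.zpow_mem hb i) (C.zpow_mem ha j), hij⟩
    have hcard : Nat.card C = p ^ 2 * Nat.card C' := by
      have h1 : C'.relIndex C = p ^ 2 := by
        rw [Subgroup.inf_relIndex_right, Subgroup.relIndex_ker, hmap, Subgroup.card_top,
          Nat.card_prod, h.card, sq]
      have h2 := Subgroup.relIndex_mul_relIndex ⊥ C' C bot_le inf_le_right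
      rw [Subgroup.relIndex_bot_left, Subgroup.relIndex_bot_left, h1] at h2
      rw [← h2, mul_comm]
    have hlt : Nat.card C' ≤ N := by
      have h0 : 0 < Nat.card C' := Nat.card_pos
      have : 4 ≤ p ^ 2 := by have := hp.two_le; nlinarith
      nlinarith
    obtain ⟨m, hm⟩ := ih C' hlt
    refine ⟨m + 1, ?_⟩
    have heq : C' ⊓ Subgroup.centralizer (C' : Set G) = C ⊓ Subgroup.centralizer (C : Set G) := by
      ext z
      rw [@Subgroup.mem_inf _ _ C', @Subgroup.mem_inf _ _ C, Subgroup.mem_centralizer_iff,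
        Subgroup.mem_centralizer_iff]
      constructor
      · rintro ⟨⟨hz1, hz2⟩, hz3⟩
        refine ⟨hz2, fun g hg => ?_⟩
        obtain ⟨i, j, hij⟩ := hsur (δ g)
        have hc' : (b ^ i * a ^ j)⁻¹ * g ∈ C' := by
          refine ⟨?_, C.mul_mem (C.inv_mem (C.mul_mem (C.zpow_mem hb i) (C.zpow_mem ha j))) hg⟩
          change _ ∈ δ.ker
          rw [MonoidHom.mem_ker, map_mul, map_inv, hij, inv_mul_cancel]
        obtain ⟨c1, c2⟩ := (hδ z).1 hz1
        have c1' : Commute a z := c1.symm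
        have c2' : Commute b z := c2.symm
        have c3 : Commute ((b ^ i * a ^ j)⁻¹ * g) z := hz3 _ hc'
        have := ((c2'.zpow_left i).mul_left (c1'.zpow_left j)).mul_left c3
        rw [mul_inv_cancel_left] at this
        exact this
      · rintro ⟨hz1, hz2⟩
        refine ⟨⟨(hδ z).2 ⟨(hz2 a ha).symm, (hz2 b hb).symm⟩, hz1⟩, fun y hy => hz2 y hy.2⟩
    rw [hcard, hm, heq, ← mul_assoc, ← pow_add]
    congr 2
    ring

end Part3
section Part4
open scoped commutatorElement IsMulCommutative

theorem SM_comm_mul_central {E : Type*} [Group E] (u v r s : E) (hr : r ∈ Subgroup.center E)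
    (hs : s ∈ Subgroup.center E) : ⁅u * r, v * s⁆ = ⁅u, v⁆ := by
  have e1 : ∀ u v r : E, r ∈ Subgroup.center E → ⁅u * r, v⁆ = ⁅u, v⁆ := by
    intro u v r hr
    have := Subgroup.mem_center_iff.1 hr
    rw [commutatorElement_def, commutatorElement_def, mul_assoc u r v, ← this v]
    group
  rw [e1 _ _ _ hr, ← commutatorElement_inv, e1 _ _ _ hs, commutatorElement_inv]

theorem SM_ab_elem {p : ℕ} {G : Type*} [Group G] (h : SMHyp p G) (x : Abelianization G) :
    x ^ p = 1 := by
  obtain ⟨g, rfl⟩ := QuotientGroup.mk_surjective (s := commutator G) x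
  exact (QuotientGroup.eq_one_iff (N := commutator G) (g ^ p)).2 (h.pow g)

theorem SM_of_eq_one {G : Type*} [Group G] (x : G) :
    Abelianization.of x = 1 ↔ x ∈ commutator G := 
  QuotientGroup.eq_one_iff (N := commutator G) x

theorem SM_of_surj {G : Type*} [Group G] : Function.Surjective (Abelianization.of (G := G)) :=
  QuotientGroup.mk_surjective (s := commutator G)

theorem SM_frattini {p : ℕ} (hp : p.Prime) {H : Type*} [Group H] (h : SMHyp p H)
    (hzc : Subgroup.center H = commutator H) : Subgroup.center H = frattini H := by
  haveI := h.fin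
  apply le_antisymm
  · rw [hzc]
    unfold frattini Order.radical
    refine le_iInf₂ fun M hM => ?_
    by_contra hcon
    have hsup : M ⊔ commutator H = ⊤ := hM.2 _ (lt_of_le_of_ne le_sup_left (fun he => hcon (by
      rw [he]; exact le_sup_right)))
    have key : ∀ x : H, ∃ m ∈ M, ∃ c ∈ commutator H, m * c = x := by
      intro x
      rw [← Subgroup.mem_sup_of_normal_right, hsup]; trivial
    apply hcon
    refine Subgroup.commutator_le.2 fun x _ y _ => ?_
    obtain ⟨m, hm, c, hc, rfl⟩ := key x
    obtain ⟨m', hm', c', hc', rfl⟩ := key y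
    rw [SM_comm_mul_central _ _ _ _ (h.central hc) (h.central hc'), commutatorElement_def]
    exact M.mul_mem (M.mul_mem (M.mul_mem hm hm') (M.inv_mem hm)) (M.inv_mem hm')
  · rw [hzc]
    obtain ⟨W, hW⟩ := SM_compl hp (SM_ab_elem h) ((frattini H).map Abelianization.of)
    have h1 : W.comap Abelianization.of ⊔ frattini H = ⊤ := by
      rw [eq_top_iff]
      rintro x -
      have hx : Abelianization.of x ∈ (frattini H).map Abelianization.of ⊔ W := by
        rw [hW.sup_eq_top]; trivial
      obtain ⟨_, ⟨y, hy, rfl⟩, w, hw, hyw⟩ := Subgroup.mem_sup.1 hx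
      have h2 : x * y⁻¹ ∈ W.comap Abelianization.of := by
        rw [Subgroup.mem_comap, map_mul, map_inv, ← hyw]
        simpa using hw
      simpa using Subgroup.mul_mem_sup h2 hy
    have h2 := frattini_nongenerating h1
    have h3 : W = ⊤ := by
      rw [eq_top_iff]
      rintro x -
      obtain ⟨g, rfl⟩ := SM_of_surj x
      have : g ∈ W.comap Abelianization.of := by rw [h2]; trivial
      exact this
    have h4 := hW.inf_eq_bot
    rw [h3, inf_top_eq] at h4
    intro x hx
    have : Abelianization.of x ∈ (frattini H).map Abelianization.of := ⟨x, hx, rfl⟩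
    rw [h4, Subgroup.mem_bot] at this
    exact (SM_of_eq_one x).1 this

theorem SM_transfer {p : ℕ} {H K : Type*} [Group H] [Group K] (e : H ≃* K) (h : SMHyp p H) :
    SMHyp p K ∧ (Subgroup.center H = commutator H → Subgroup.center K = commutator K) := by
  haveI := h.fin
  have hm : (commutator H).map e.toMonoidHom = commutator K := by
    rw [commutator_def, Subgroup.map_commutator,
      Subgroup.map_top_of_surjective _ e.surjective, commutator_def]
  have hz : ∀ x, e x ∈ Subgroup.center K ↔ x ∈ Subgroup.center H := by
    intro x
    rw [Subgroup.mem_center_iff, Subgroup.mem_center_iff, e.surjective.forall]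
    refine forall_congr' fun y => ?_
    rw [← map_mul, ← map_mul, e.injective.eq_iff]
  have hc : ∀ x, e x ∈ commutator K ↔ x ∈ commutator H := by
    intro x
    rw [← hm]
    exact Subgroup.mem_map_iff_mem e.injective (f := e.toMonoidHom)
  refine ⟨⟨Finite.of_equiv H e.toEquiv, ?_, ?_, ?_, ?_⟩, ?_⟩
  · rw [← hm, ← h.card]
    exact Nat.card_congr ((commutator H).equivMapOfInjective e.toMonoidHom e.injective).toEquiv.symm
  · intro y hy
    obtain ⟨x, rfl⟩ := e.surjective y
    exact (hz x).2 (h.central ((hc x).1 hy))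
  · intro y
    obtain ⟨x, rfl⟩ := e.surjective y
    rw [← map_pow]
    exact (hc _).2 (h.pow x)
  · intro y hy
    obtain ⟨x, rfl⟩ := e.surjective y
    rw [← map_pow, h.cen x ((hz x).1 hy), map_one]
  · intro hh
    ext y
    obtain ⟨x, rfl⟩ := e.surjective y
    rw [hz, hc, hh]

theorem SM_decomp {p n : ℕ} (hp : p.Prime) {G : Type*} [Group G] (h : SMHyp p G)
    (hG : Nat.card G = p ^ n) :
    ∃ (H : Type) (_ : Group H) (m k : ℕ), 1 ≤ m ∧ n = 2 * m + 1 + k ∧ SMHyp p H ∧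
      IsExtraspecial p H ∧ Nat.card H = p ^ (2 * m + 1) ∧
      Nonempty (G ≃* H × (Fin k → Multiplicative (ZMod p))) := by
  haveI := h.fin
  have hzp : ∀ x : Subgroup.center G, x ^ p = 1 := fun x => Subtype.ext (h.cen x x.2)
  obtain ⟨T, hT⟩ := SM_compl hp hzp ((commutator G).subgroupOf (Subgroup.center G))
  let T' : Subgroup G := T.map (Subgroup.center G).subtype
  have hT'c : T' ≤ Subgroup.center G := by rintro _ ⟨x, -, rfl⟩; exact x.2
  have hT'1 : ∀ x ∈ T', x ∈ commutator G → x = 1 := by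
    rintro _ ⟨x, hx, rfl⟩ hxc
    have : x ∈ (commutator G).subgroupOf (Subgroup.center G) ⊓ T := ⟨hxc, hx⟩
    rw [hT.inf_eq_bot, Subgroup.mem_bot] at this
    rw [this]; rfl
  have hZ : ∀ z ∈ Subgroup.center G, ∃ c ∈ commutator G, ∃ t ∈ T', c * t = z := by
    intro z hz
    have : (⟨z, hz⟩ : Subgroup.center G) ∈
      (commutator G).subgroupOf (Subgroup.center G) ⊔ T := by rw [hT.sup_eq_top]; trivial
    obtain ⟨c, hc, t, ht, hct⟩ := Subgroup.mem_sup.1 this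
    exact ⟨c, hc, t, ⟨t, ht, rfl⟩, congrArg Subtype.val hct⟩
  obtain ⟨W, hW⟩ := SM_compl hp (SM_ab_elem h) (T'.map Abelianization.of)
  let H : Subgroup G := W.comap Abelianization.of
  have hGH : commutator G ≤ H := by
    intro x hx
    rw [Subgroup.mem_comap, (SM_of_eq_one x).2 hx]
    exact W.one_mem
  have hHT : ∀ x ∈ H, x ∈ T' → x = 1 := by
    intro x hx hxT
    apply hT'1 x hxT
    have : Abelianization.of x ∈ T'.map Abelianization.of ⊓ W := ⟨⟨x, hxT, rfl⟩, hx⟩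
    rw [hW.inf_eq_bot, Subgroup.mem_bot] at this
    exact (SM_of_eq_one x).1 this
  have hsur : ∀ g : G, ∃ a ∈ H, ∃ t ∈ T', a * t = g := by
    intro g
    have hg : Abelianization.of g ∈ T'.map Abelianization.of ⊔ W := by
      rw [hW.sup_eq_top]; trivial
    obtain ⟨_, ⟨t, ht, rfl⟩, w, hw, htw⟩ := Subgroup.mem_sup.1 hg
    refine ⟨g * t⁻¹, ?_, t, ht, by simp⟩
    rw [Subgroup.mem_comap, map_mul, map_inv, ← htw]
    simpa using hw
  -- iso
  let f : H × T →* G :=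
    { toFun := fun x => (x.1 : G) * ((x.2 : Subgroup.center G) : G)
      map_one' := by simp
      map_mul' := fun x y => by
        have := Subgroup.mem_center_iff.1 (x.2 : Subgroup.center G).2 (y.1 : G)
        simp only [Prod.fst_mul, Prod.snd_mul, Subgroup.coe_mul]
        rw [mul_assoc, mul_assoc, ← mul_assoc (y.1 : G), this]
        simp only [mul_assoc] }
  have hf : Function.Bijective f := by
    constructor
    · rw [injective_iff_map_eq_one]
      rintro ⟨a, t⟩ hat
      have hat' : (a : G) * ((t : Subgroup.center G) : G) = 1 := hat
      have ht' : ((t : Subgroup.center G) : G) ∈ T' := ⟨t, t.2, rfl⟩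
      have h1 : (a : G) ∈ T' := by
        rw [eq_inv_of_mul_eq_one_left hat']; exact T'.inv_mem ht'
      have h2 := hHT a a.2 h1
      rw [h2, one_mul] at hat'
      exact Prod.ext (Subtype.ext h2) (Subtype.ext (Subtype.ext hat'))
    · intro g
      obtain ⟨a, ha, _, ⟨t, ht, rfl⟩, rfl⟩ := hsur g
      exact ⟨(⟨a, ha⟩, ⟨t, ht⟩), rfl⟩
  let e : H × T ≃* G := MulEquiv.ofBijective f hf
  have hinj : Function.Injective H.subtype := H.subtype_injective
  have hcomm : (commutator H).map H.subtype = commutator G := by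
    apply le_antisymm
    · rw [commutator_def, Subgroup.map_commutator]
      exact Subgroup.commutator_mono le_top le_top
    · refine Subgroup.commutator_le.2 fun x _ y _ => ?_
      obtain ⟨a, ha, t, ht, rfl⟩ := hsur x
      obtain ⟨b, hb, s, hs, rfl⟩ := hsur y
      rw [SM_comm_mul_central _ _ _ _ (hT'c ht) (hT'c hs)]
      exact ⟨⁅⟨a, ha⟩, ⟨b, hb⟩⁆, Subgroup.commutator_mem_commutator trivial trivial, rfl⟩
  have hcomm' : ∀ x : H, x ∈ commutator H ↔ (x : G) ∈ commutator G := by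
    intro x
    rw [← hcomm]
    exact (Subgroup.mem_map_iff_mem hinj).symm
  have hcen' : ∀ x : H, x ∈ Subgroup.center H → (x : G) ∈ Subgroup.center G := by
    intro x hx
    rw [Subgroup.mem_center_iff]
    intro g
    obtain ⟨a, ha, t, ht, rfl⟩ := hsur g
    have h1 : Commute a (x : G) := congrArg Subtype.val (Subgroup.mem_center_iff.1 hx ⟨a, ha⟩)
    have h2 : Commute t (x : G) := (Subgroup.mem_center_iff.1 (hT'c ht) x).symm
    exact h1.mul_left h2
  have hcc : Subgroup.center H = commutator H := by
    ext x
    rw [hcomm']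
    constructor
    · intro hx
      obtain ⟨c, hc, t, ht, hct⟩ := hZ x (hcen' x hx)
      have : t ∈ H := by
        have : t = c⁻¹ * x := by rw [← hct]; simp
        rw [this]; exact H.mul_mem (H.inv_mem (hGH hc)) x.2
      rw [hHT t this ht, mul_one] at hct
      rw [← hct]; exact hc
    · intro hx
      rw [Subgroup.mem_center_iff]
      intro y
      exact Subtype.ext (Subgroup.mem_center_iff.1 (h.central hx) y)
  have hH : SMHyp p H := by
    refine ⟨inferInstance, ?_, hcc.ge, ?_, ?_⟩
    · have h1 := h.card
      rw [← hcomm] at h1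
      rw [← h1]
      exact Nat.card_congr ((commutator H).equivMapOfInjective H.subtype hinj).toEquiv
    · intro x
      rw [hcomm']
      exact h.pow x
    · intro z hz
      exact Subtype.ext (h.cen z (hcen' z hz))
  have hcz : Nat.card (Subgroup.center H) = p := by rw [hcc]; exact hH.card
  -- cardinals
  obtain ⟨m, hm⟩ := SM_even hp hH (Nat.card (⊤ : Subgroup H)) ⊤ le_rfl
  rw [top_inf_eq, Subgroup.coe_top, Subgroup.centralizer_univ, hcz, Subgroup.card_top,
    ← pow_succ] at hm
  have hm1 : 1 ≤ m := by
    by_contra hcon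
    have hm0 : m = 0 := by omega
    subst hm0
    have h1 : Subgroup.center H = ⊤ := Subgroup.eq_top_of_card_eq _ (by rw [hcz, hm]; simp)
    obtain ⟨a, b, hab⟩ := SM_nonab hp hH
    apply hab
    have : b ∈ Subgroup.center H := by rw [h1]; trivial
    exact Subgroup.mem_center_iff.1 this a
  have hprod : Nat.card H * Nat.card T = p ^ n := by
    rw [← Nat.card_prod, Nat.card_congr e.toEquiv, hG]
  obtain ⟨k, -, hk⟩ := (Nat.dvd_prime_pow hp).1 (Dvd.intro_left _ hprod)
  have hn : n = 2 * m + 1 + k := by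
    rw [hm, hk, ← pow_add] at hprod
    exact (Nat.pow_right_injective hp.two_le hprod).symm
  obtain ⟨e2⟩ := SM_elem (A := T) hp hk (fun x => Subtype.ext (hzp x))
  let e3 : Multiplicative (Fin k → ZMod p) ≃* (Fin k → Multiplicative (ZMod p)) :=
    { toFun := fun v i => Multiplicative.ofAdd (v.toAdd i)
      invFun := fun v => Multiplicative.ofAdd fun i => (v i).toAdd
      left_inv := fun _ => rfl
      right_inv := fun _ => rfl
      map_mul' := fun _ _ => rfl }
  let e4 : Shrink.{0} H ≃* H := Shrink.mulEquiv
  obtain ⟨hS, hS2⟩ := SM_transfer e4.symm hH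
  have hS3 := hS2 hcc
  refine ⟨Shrink.{0} H, inferInstance, m, k, hm1, hn, hS, ⟨hS3, SM_frattini hp hS hS3, ?_⟩, ?_, ⟨?_⟩⟩
  · rw [hS3]; exact hS.card
  · rw [Nat.card_congr e4.toEquiv, hm]
  · exact e.symm.trans (MulEquiv.prodCongr e4.symm (e2.trans e3))

end Part4
section Part5
open scoped commutatorElement

theorem SM_pv {H : Type*} [Group H] {N : ℕ} {x : H} (hx : x ^ N = 1) (k : ℕ) :
    x ^ (k : ZMod N).val = x ^ k := by
  rw [ZMod.val_natCast]
  conv_rhs => rw [← Nat.mod_add_div k N, pow_add, pow_mul, hx, one_pow, mul_one]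

theorem SM_pv_add {H : Type*} [Group H] {N : ℕ} [NeZero N] {x : H} (hx : x ^ N = 1)
    (i j : ZMod N) : x ^ (i + j).val = x ^ i.val * x ^ j.val := by
  rw [← pow_add, ← SM_pv hx (i.val + j.val)]
  congr 2
  push_cast
  simp

theorem SM_pv_mul {H : Type*} [Group H] {N : ℕ} [NeZero N] {x : H} (hx : x ^ N = 1)
    (i j : ZMod N) : x ^ (i * j).val = x ^ (i.val * j.val) := by
  rw [← SM_pv hx (i.val * j.val)]
  congr 2
  push_cast
  simp

theorem SM_pv_sub {H : Type*} [Group H] {N : ℕ} [NeZero N] {x : H} (hx : x ^ N = 1)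
    (i j : ZMod N) : x ^ (j - i).val = (x ^ i.val)⁻¹ * x ^ j.val := by
  rw [eq_inv_mul_iff_mul_eq, ← SM_pv_add hx]
  congr 2
  abel

/-- surjectivity from counting -/
theorem SM_surj_of_card {E H : Type*} [Group E] [Group H] [Finite H] [Finite E]
    (ε : E →* H) (q : ℕ) (hq : 0 < q) (hk : Nat.card ε.ker ≤ q)
    (hc : q * Nat.card H ≤ Nat.card E) :
    Function.Surjective ε := by
  rw [← MonoidHom.range_eq_top]
  apply Subgroup.eq_top_of_le_card
  have h1 := ε.ker.card_mul_index
  rw [Subgroup.index_ker] at h1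
  have h2 : q * Nat.card H ≤ q * Nat.card ε.range :=
    hc.trans (h1 ▸ Nat.mul_le_mul_right _ hk)
  exact Nat.le_of_mul_le_mul_left h2 hq

theorem SM_p2_rel {H : Type*} [Group H] (h : SMHyp 2 H) {x y : H}
    (hx : x ^ 2 ≠ 1) (hxy : x * y ≠ y * x) :
    x ^ 4 = 1 ∧ orderOf x = 4 ∧ y * x = x⁻¹ * y ∧ ∀ w : H, w ^ 2 ≠ 1 → w ^ 2 = x ^ 2 := by
  have huniq : ∀ u v : H, u ∈ commutator H → v ∈ commutator H → u ≠ 1 → v ≠ 1 → u = v := by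
    intro u v hu hv hu1 hv1
    obtain ⟨s, t, hst, hst2⟩ := Nat.card_eq_two_iff.1 h.card
    have key : ∀ w : commutator H, w = s ∨ w = t := by
      intro w
      have : w ∈ ({s, t} : Set _) := by rw [hst2]; trivial
      simpa using this
    have k1 := key 1
    have k2 := key ⟨u, hu⟩
    have k3 := key ⟨v, hv⟩
    have n2 : (⟨u, hu⟩ : commutator H) ≠ 1 := fun e => hu1 (congrArg Subtype.val e)
    have n3 : (⟨v, hv⟩ : commutator H) ≠ 1 := fun e => hv1 (congrArg Subtype.val e)
    have : (⟨u, hu⟩ : commutator H) = ⟨v, hv⟩ := by grind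
    exact congrArg Subtype.val this
  have h4 : x ^ 4 = 1 := by
    have := SM_comm_pow_one h _ (h.pow x)
    rw [← pow_mul] at this
    exact this
  refine ⟨h4, ?_, ?_, fun w hw => huniq _ _ (h.pow w) (h.pow x) hw hx⟩
  · exact orderOf_eq_prime_pow (p := 2) (n := 1) (by simpa using hx) (by simpa using h4)
  · have hc : ⁅y, x⁆ = x ^ 2 := by
      refine huniq _ _ ?_ (h.pow x) ?_ hx
      · exact Subgroup.commutator_mem_commutator trivial trivial
      · rw [Ne, commutatorElement_eq_one_iff_mul_comm]
        exact fun e => hxy e.symm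
    rw [commutatorElement_def, mul_inv_eq_iff_eq_mul, mul_inv_eq_iff_eq_mul] at hc
    rw [hc]
    congr 1
    rw [eq_inv_iff_mul_eq_one, ← h4]
    group

theorem SM_inv_pow {H : Type*} [Group H] {x y : H} (hr : y * x = x⁻¹ * y) (k : ℕ) :
    x ^ k * y = y * (x ^ k)⁻¹ := by
  have h1 : y⁻¹ * x * y = x⁻¹ := by
    have : x = y⁻¹ * x⁻¹ * y := by rw [mul_assoc, ← hr]; group
    calc y⁻¹ * x * y = (y⁻¹ * x⁻¹ * y)⁻¹ := by group
      _ = x⁻¹ := by rw [← this]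
  have h2 : (y⁻¹ * x * y) ^ k = y⁻¹ * x ^ k * y := by
    have := conj_pow (a := y⁻¹) (b := x) (i := k)
    simpa using this
  rw [h1] at h2
  rw [← inv_pow, h2]
  group

theorem SM_Q8 {H : Type*} [Group H] (h : SMHyp 2 H) (hcard : Nat.card H = 8)
    (hq : ∀ w : H, w ∉ Subgroup.center H → w ^ 2 ≠ 1) : Nonempty (QuaternionGroup 2 ≃* H) := by
  haveI := h.fin
  obtain ⟨x, y, hxy⟩ := SM_nonab Nat.prime_two h
  have hx : x ^ 2 ≠ 1 := hq x fun hc => hxy (Subgroup.mem_center_iff.1 hc y).symm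
  have hy : y ^ 2 ≠ 1 := hq y fun hc => hxy (Subgroup.mem_center_iff.1 hc x)
  obtain ⟨h4, ho, hr, hu⟩ := SM_p2_rel h hx hxy
  have hyx := hu y hy
  have hip := SM_inv_pow hr
  have h4' : x ^ (2 * 2) = 1 := h4
  let f : QuaternionGroup 2 → H := fun q => match q with
    | .a i => x ^ i.val
    | .xa i => y * x ^ i.val
  let F : QuaternionGroup 2 →* H := MonoidHom.mk' f (by
    rintro (i | i) (j | j)
    · exact SM_pv_add h4' i j
    · change y * x ^ (j - i).val = x ^ i.val * (y * x ^ j.val)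
      rw [SM_pv_sub h4', ← mul_assoc (x ^ i.val), hip]
      group
    · change y * x ^ (i + j).val = y * x ^ i.val * x ^ j.val
      rw [SM_pv_add h4', mul_assoc]
    · change x ^ (2 + j - i).val = y * x ^ i.val * (y * x ^ j.val)
      have : y * x ^ i.val * (y * x ^ j.val) = y ^ 2 * ((x ^ i.val)⁻¹ * x ^ j.val) := by
        rw [mul_assoc y, ← mul_assoc (x ^ i.val), hip, pow_two]
        group
      rw [this, ← SM_pv_sub h4', hyx, add_sub_assoc, SM_pv_add h4']
      rfl)
  have hinj : Function.Injective F := by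
    rw [injective_iff_map_eq_one]
    rintro (i | i) hi
    · change x ^ i.val = 1 at hi
      have := orderOf_dvd_of_pow_eq_one hi
      rw [ho] at this
      have hlt : i.val < 4 := ZMod.val_lt i
      have h0 : i.val = 0 := by omega
      rw [(ZMod.val_eq_zero i).1 h0]
      rfl
    · change y * x ^ i.val = 1 at hi
      exfalso
      apply hxy
      rw [eq_inv_of_mul_eq_one_left hi]
      group
  have hb : Function.Bijective F := by
    rw [Nat.bijective_iff_injective_and_card]
    refine ⟨hinj, ?_⟩
    rw [hcard, Nat.card_eq_fintype_card, QuaternionGroup.card]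
  exact ⟨MulEquiv.ofBijective F hb⟩

theorem SM_D8 {G : Type u} [Group G] {H : Type*} [Group H] (φ : G →* H)
    (hφ : Function.Surjective φ) (h : SMHyp 2 H) (hcard : Nat.card H = 8)
    (hq : ∃ w : H, w ∉ Subgroup.center H ∧ w ^ 2 = 1) : ¬ SMCond G := by
  haveI := h.fin
  obtain ⟨y, hyc, hy⟩ := hq
  have : ∃ x : H, x ^ 2 ≠ 1 ∧ x * y ≠ y * x := by
    rw [Subgroup.mem_center_iff] at hyc
    push Not at hyc
    obtain ⟨w, hw⟩ := hyc
    by_cases hw2 : w ^ 2 = 1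
    · refine ⟨y * w, fun e => hw ?_, fun e => hw ?_⟩
      · rw [pow_two] at e hy hw2
        have h1 := eq_inv_of_mul_eq_one_left e
        rw [mul_inv_rev, ← eq_inv_of_mul_eq_one_left hy, ← eq_inv_of_mul_eq_one_left hw2] at h1
        exact h1.symm
      · rw [mul_assoc] at e
        exact mul_left_cancel e
    · exact ⟨w, hw2, hw⟩
  obtain ⟨x, hx, hxy⟩ := this
  obtain ⟨h4, ho, hr, hu⟩ := SM_p2_rel h hx hxy
  have hip := SM_inv_pow hr
  have h8 : x ^ 8 = 1 := by
    rw [show 8 = 4 * 2 from rfl, pow_mul, h4, one_pow]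
  let f : DihedralGroup 8 → H := fun q => match q with
    | .r i => x ^ i.val
    | .sr i => y * x ^ i.val
  let F : DihedralGroup 8 →* H := MonoidHom.mk' f (by
    rintro (i | i) (j | j)
    · exact SM_pv_add h8 i j
    · change y * x ^ (j - i).val = x ^ i.val * (y * x ^ j.val)
      rw [SM_pv_sub h8, ← mul_assoc (x ^ i.val), hip]
      group
    · change y * x ^ (i + j).val = y * x ^ i.val * x ^ j.val
      rw [SM_pv_add h8, mul_assoc]
    · change x ^ (j - i).val = y * x ^ i.val * (y * x ^ j.val)
      have : y * x ^ i.val * (y * x ^ j.val) = y ^ 2 * ((x ^ i.val)⁻¹ * x ^ j.val) := by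
        rw [mul_assoc y, ← mul_assoc (x ^ i.val), hip, pow_two]
        group
      rw [this, ← SM_pv_sub h8, hy, one_mul])
  have hker : ∀ q, F q = 1 → q = 1 ∨ q = .r 4 := by
    rintro (i | i) hi
    · change x ^ i.val = 1 at hi
      have := orderOf_dvd_of_pow_eq_one hi
      rw [ho] at this
      have hlt : i.val < 8 := ZMod.val_lt i
      have h0 : i.val = 0 ∨ i.val = 4 := by omega
      rcases h0 with h0 | h0
      · left
        rw [(ZMod.val_eq_zero i).1 h0]; rfl
      · right
        congr 1
        rw [← ZMod.natCast_zmod_val i, h0]; rfl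
    · change y * x ^ i.val = 1 at hi
      exfalso
      apply hxy
      rw [eq_inv_of_mul_eq_one_left hi]
      group
  have hs : Function.Surjective F := by
    refine SM_surj_of_card F 2 (by norm_num) ?_ ?_
    · have : (F.ker : Set (DihedralGroup 8)) ⊆ {1, .r 4} := by
        intro q hq
        simpa using hker q hq
      have h2 := Set.ncard_le_ncard this (Set.toFinite _)
      exact (h2.trans (Set.ncard_insert_le _ _)).trans (by simp)
    · rw [hcard, Nat.card_eq_fintype_card, DihedralGroup.card]
  refine SM_not_cond φ hφ F hs ?_ (.sr 0) (.sr 0) (.r 1) (by decide)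
  intro q hq
  have hd : ∀ g : DihedralGroup 8, g * .r 4 = .r 4 * g := by decide
  rcases hker q hq with rfl | rfl
  · exact one_mem _
  · exact Subgroup.mem_center_iff.2 hd

/-- class three group of order `p ^ 4` (with a parameter `t`, used with `2 t = 1`). -/
structure SMW (p : ℕ) (t : ZMod p) where
  a : ZMod p
  u : ZMod p
  v : ZMod p
  w : ZMod p

theorem SMW.ext' {p : ℕ} {t : ZMod p} {g k : SMW p t} (h1 : g.a = k.a) (h2 : g.u = k.u)
    (h3 : g.v = k.v) (h4 : g.w = k.w) : g = k := by
  cases g; cases k; simp_all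

def SMW.mulf {p : ℕ} {t : ZMod p} (g k : SMW p t) : SMW p t :=
  ⟨g.a + k.a, g.u + k.u, g.v + k.v + g.a * k.u, g.w + k.w + g.a * k.v + t * g.a ^ 2 * k.u⟩

def SMW.invf {p : ℕ} {t : ZMod p} (g : SMW p t) : SMW p t :=
  ⟨-g.a, -g.u, -g.v + g.a * g.u, -g.w + g.a * g.v - t * g.a ^ 2 * g.u⟩

@[reducible] def SMW.grp {p : ℕ} {t : ZMod p} (ht : 2 * t = 1) : Group (SMW p t) :=
  letI : Mul (SMW p t) := ⟨SMW.mulf⟩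
  letI : One (SMW p t) := ⟨⟨0, 0, 0, 0⟩⟩
  letI : Inv (SMW p t) := ⟨SMW.invf⟩
  Group.ofLeftAxioms
    (by
      intro x y z
      change SMW.mulf (SMW.mulf x y) z = SMW.mulf x (SMW.mulf y z)
      apply SMW.ext'
      · simp only [SMW.mulf]; ring
      · simp only [SMW.mulf]; ring
      · simp only [SMW.mulf]; ring
      · simp only [SMW.mulf]
        linear_combination (x.a * y.a * z.u) * ht)
    (by
      intro x
      change SMW.mulf ⟨0, 0, 0, 0⟩ x = x
      apply SMW.ext' <;> simp [SMW.mulf])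
    (by
      intro x
      change SMW.mulf (SMW.invf x) x = ⟨0, 0, 0, 0⟩
      apply SMW.ext' <;> simp only [SMW.mulf, SMW.invf] <;> ring)

def SMW.equiv (p : ℕ) (t : ZMod p) : SMW p t ≃ (ZMod p × ZMod p) × (ZMod p × ZMod p) where
  toFun g := ((g.a, g.u), (g.v, g.w))
  invFun q := ⟨q.1.1, q.1.2, q.2.1, q.2.2⟩
  left_inv _ := rfl
  right_inv _ := rfl

theorem SM_pv_eq_one {H : Type*} [Group H] {p : ℕ} (hp : p.Prime) {z : H} (hz : z ^ p = 1)
    (hz1 : z ≠ 1) (i : ZMod p) (hi : z ^ i.val = 1) : i = 0 := by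
  haveI : Fact p.Prime := ⟨hp⟩
  have ho : orderOf z = p := orderOf_eq_prime hz hz1
  have h1 := orderOf_dvd_of_pow_eq_one hi
  rw [ho] at h1
  exact (ZMod.val_eq_zero i).1 (Nat.eq_zero_of_dvd_of_lt h1 (ZMod.val_lt i))

theorem SM_swap {H : Type*} [Group H] {x y z : H} (hz : ∀ g, g * z = z * g)
    (hr : x * y = z * (y * x)) (i j : ℕ) : x ^ i * y ^ j = z ^ (i * j) * (y ^ j * x ^ i) := by
  have hzc : ∀ k g, g * z ^ k = z ^ k * g := fun k g =>
    ((show Commute g z from hz g).pow_right k)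
  have h1 : ∀ i, x ^ i * y = z ^ i * (y * x ^ i) := by
    intro i
    induction i with
    | zero => simp
    | succ i ih =>
      rw [pow_succ, mul_assoc, hr, ← mul_assoc (x ^ i), hz, mul_assoc, ← mul_assoc (x ^ i), ih,
        pow_succ' z]
      simp only [mul_assoc]
  induction j with
  | zero => simp
  | succ j ih =>
    rw [pow_succ, ← mul_assoc, ih, mul_assoc, mul_assoc, h1, ← mul_assoc (y ^ j), hzc, mul_assoc,
      ← mul_assoc (z ^ (i * j)), ← pow_add, ← Nat.mul_succ]
    simp only [mul_assoc]

theorem SM_heis {G : Type u} [Group G] {H : Type*} [Group H] {p : ℕ} (hp : p.Prime) (hodd : Odd p)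
    (φ : G →* H) (hφ : Function.Surjective φ) (h : SMHyp p H) (hcard : Nat.card H = p ^ 3)
    (hq : ∀ w : H, w ^ p = 1) : ¬ SMCond G := by
  haveI := h.fin
  haveI : Fact p.Prime := ⟨hp⟩
  have h20 : (2 : ZMod p) ≠ 0 := by
    intro h2
    have h3 : ((2 : ℕ) : ZMod p) = 0 := by exact_mod_cast h2
    rw [ZMod.natCast_eq_zero_iff] at h3
    have h4 := (Nat.prime_dvd_prime_iff_eq hp Nat.prime_two).1 h3
    subst h4
    exact absurd hodd (by decide)
  obtain ⟨x, y, hxy⟩ := SM_nonab hp h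
  let z := ⁅x, y⁆
  have hzm : z ∈ commutator H := Subgroup.commutator_mem_commutator trivial trivial
  have hz : ∀ g, g * z = z * g := Subgroup.mem_center_iff.1 (h.central hzm)
  have hz1 : z ≠ 1 := by
    rw [Ne, commutatorElement_eq_one_iff_mul_comm]
    exact hxy
  have hr : x * y = z * (y * x) := by
    simp only [z, commutatorElement_def]; group
  have hsw := SM_swap hz hr
  have hzc : ∀ k g, g * z ^ k = z ^ k * g := fun k g =>
    ((show Commute g z from hz g).pow_right k)
  let t : ZMod p := 2⁻¹
  have ht : 2 * t = 1 := mul_inv_cancel₀ h20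
  letI : Group (SMW p t) := SMW.grp ht
  haveI : Finite (SMW p t) := Finite.of_equiv _ (SMW.equiv p t).symm
  let F : SMW p t →* H := MonoidHom.mk' (fun g => z ^ g.v.val * (y ^ g.u.val * x ^ g.a.val)) (by
    intro g k
    change z ^ (g.v + k.v + g.a * k.u).val * (y ^ (g.u + k.u).val * x ^ (g.a + k.a).val) = _
    rw [SM_pv_add (hq z), SM_pv_add (hq z), SM_pv_mul (hq z), SM_pv_add (hq y), SM_pv_add (hq x)]
    have e1 : z ^ g.v.val * (y ^ g.u.val * x ^ g.a.val) * (z ^ k.v.val * (y ^ k.u.val * x ^ k.a.val))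
      = z ^ g.v.val * z ^ k.v.val * (y ^ g.u.val * (x ^ g.a.val * y ^ k.u.val) * x ^ k.a.val) := by
      rw [← mul_assoc, mul_assoc (z ^ g.v.val), hzc _ (y ^ g.u.val * x ^ g.a.val)]
      simp only [mul_assoc]
    rw [e1, hsw, ← mul_assoc (y ^ g.u.val), hzc _ (y ^ g.u.val)]
    simp only [mul_assoc])
  have hker : ∀ g, F g = 1 → g.a = 0 ∧ g.u = 0 ∧ g.v = 0 := by
    intro g hg
    change z ^ g.v.val * (y ^ g.u.val * x ^ g.a.val) = 1 at hg
    have ha : g.a = 0 := by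
      apply SM_pv_eq_one hp (hq z) hz1
      have h1 := hsw g.a.val 1
      have h2 : x ^ g.a.val = (z ^ g.v.val * y ^ g.u.val)⁻¹ := by
        rw [← mul_assoc] at hg
        exact eq_inv_of_mul_eq_one_right hg
      have h3 : Commute (x ^ g.a.val) y := by
        rw [h2]
        refine Commute.inv_left (Commute.mul_left ?_ ?_)
        · exact (hzc _ _).symm
        · exact (Commute.refl y).pow_left _
      rw [pow_one, h3.eq, mul_one] at h1
      exact right_eq_mul.1 h1
    have hu : g.u = 0 := by
      apply SM_pv_eq_one hp (hq z) hz1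
      have h1 := hsw 1 g.u.val
      rw [ha, ZMod.val_zero, pow_zero, mul_one] at hg
      have h2 : y ^ g.u.val = (z ^ g.v.val)⁻¹ := eq_inv_of_mul_eq_one_right hg
      have h3 : Commute x (y ^ g.u.val) := by
        rw [h2]
        exact Commute.inv_right (hzc _ _)
      rw [pow_one, h3.eq, one_mul] at h1
      exact right_eq_mul.1 h1
    refine ⟨ha, hu, ?_⟩
    apply SM_pv_eq_one hp (hq z) hz1
    simpa [ha, hu] using hg
  have hs : Function.Surjective F := by
    refine SM_surj_of_card F p hp.pos ?_ ?_
    · have hinj : Function.Injective (fun g : F.ker => g.1.w) := by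
        intro g k hgk
        obtain ⟨g1, g2, g3⟩ := hker g.1 g.2
        obtain ⟨k1, k2, k3⟩ := hker k.1 k.2
        apply Subtype.ext
        apply SMW.ext'
        · rw [g1, k1]
        · rw [g2, k2]
        · rw [g3, k3]
        · exact hgk
      simpa using Nat.card_le_card_of_injective _ hinj
    · rw [Nat.card_congr (SMW.equiv p t), hcard]
      simp only [Nat.card_prod, Nat.card_zmod]
      apply le_of_eq
      ring
  refine SM_not_cond φ hφ F hs ?_ ⟨1, 0, 0, 0⟩ ⟨1, 0, 0, 0⟩ ⟨0, 1, 0, 0⟩ ?_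
  · intro g hg
    obtain ⟨g1, g2, g3⟩ := hker g hg
    rw [Subgroup.mem_center_iff]
    intro k
    change SMW.mulf k g = SMW.mulf g k
    apply SMW.ext' <;> simp only [SMW.mulf, g1, g2, g3] <;> ring
  · intro hc
    rw [commutatorElement_eq_one_iff_mul_comm] at hc
    have hb : (⁅(⟨1, 0, 0, 0⟩ : SMW p t), (⟨0, 1, 0, 0⟩ : SMW p t)⁆) = ⟨0, 0, 1, t⟩ := by
      rw [commutatorElement_def, mul_inv_eq_iff_eq_mul, mul_inv_eq_iff_eq_mul]
      change SMW.mulf _ _ = SMW.mulf (SMW.mulf _ _) _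
      apply SMW.ext' <;> simp [SMW.mulf]
    rw [hb] at hc
    have h1 : (SMW.mulf (⟨1, 0, 0, 0⟩ : SMW p t) ⟨0, 0, 1, t⟩).w =
      (SMW.mulf (⟨0, 0, 1, t⟩ : SMW p t) ⟨1, 0, 0, 0⟩).w := congrArg SMW.w hc
    simp [SMW.mulf] at h1

end Part5
section Part6
open scoped commutatorElement

theorem SM_big {p : ℕ} (hp : p.Prime) {G : Type u} [Group G] (h : SMHyp p G)
    {H : Type*} [Group H] {m : ℕ} (hm : 2 ≤ m) (hH : IsExtraspecial p H)
    (hc : Nat.card H = p ^ (2 * m + 1)) (π : G →* H) (hπ : Function.Surjective π) :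
    SMCond G := by
  haveI := h.fin
  apply SM_caseBig hp h
  have h1 := (Subgroup.center H).card_mul_index
  rw [hH.2.2, hc, pow_succ', Nat.mul_right_inj hp.ne_zero] at h1
  have hle : Subgroup.center G ≤ (Subgroup.center H).comap π := by
    intro z hz
    rw [Subgroup.mem_comap, Subgroup.mem_center_iff]
    intro w
    obtain ⟨g, rfl⟩ := hπ w
    rw [← map_mul, ← map_mul, Subgroup.mem_center_iff.1 hz g]
  have h2 := Subgroup.index_antitone hle
  rw [Subgroup.index_comap_of_surjective _ hπ, h1] at h2
  refine lt_of_lt_of_le ?_ h2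
  rw [← pow_two]
  exact Nat.pow_lt_pow_right hp.one_lt (by omega)

theorem SM_isE {p : ℕ} (hp : p.Prime) {H : Type*} [Group H] (h : SMHyp p H)
    (hE : IsExtraspecial p H) (hc : Nat.card H = p ^ 3) (hx : ∃ x : H, x ^ p ≠ 1) : IsE₂ p H := by
  refine ⟨hE, hc, ?_⟩
  have h1 : Monoid.exponent H ∣ p ^ 2 := by
    apply Monoid.exponent_dvd_of_forall_pow_eq_one
    intro g
    rw [pow_two, pow_mul]
    exact SM_comm_pow_one h _ (h.pow g)
  obtain ⟨k, hk, hk2⟩ := (Nat.dvd_prime_pow hp).1 h1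
  obtain ⟨x, hx⟩ := hx
  have hk3 : ¬ k ≤ 1 := by
    intro hk1
    apply hx
    have h3 : Monoid.exponent H ∣ p := by
      rw [hk2]
      simpa using pow_dvd_pow p hk1
    exact Monoid.exponent_dvd_iff_forall_pow_eq_one.1 h3 x
  rw [hk2, show k = 2 by omega]

end Part6

/-- **Theorem 6.** Let `G` be a non-abelian `p`-group of order `p^n` whose
abelianization is elementary abelian of order `p^(n-1)` and whose center has
exponent `p`. Then `s(G) = 2` iff `G` is isomorphic to `Q₈ × ℤ₂^(n-3)` (`p = 2`),
`E₂ × ℤ_p^(n-3)` (`p` odd), or `H × ℤ_p^(n-2m-1)` with `H` extraspecial of order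
`p^(2m+1)`, `m ≥ 2`. -/
theorem classification_center_exponent_p {p n : ℕ} (hp : p.Prime)
    {G : Type*} [Group G] (hG : Nat.card G = p ^ n)
    (hnab : ∃ a b : G, a * b ≠ b * a)
    (habCard : Nat.card (Abelianization G) = p ^ (n - 1))
    (habElem : ∀ x : Abelianization G, x ^ p = 1)
    (hZexp : ∀ z ∈ Subgroup.center G, z ^ p = 1) :
    Nat.card (SchurMultiplier G) = p ^ ((n - 1) * (n - 2) / 2 - 1) ↔
      (p = 2 ∧ Nonempty (G ≃* QuaternionGroup 2 ×
        (Fin (n - 3) → Multiplicative (ZMod 2)))) ∨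
      (Odd p ∧ ∃ (E : Type) (_ : Group E), IsE₂ p E ∧
        Nonempty (G ≃* E × (Fin (n - 3) → Multiplicative (ZMod p)))) ∨
      (∃ (H : Type) (_ : Group H) (m : ℕ), 2 ≤ m ∧ IsExtraspecial p H ∧
        Nat.card H = p ^ (2 * m + 1) ∧
        Nonempty (G ≃* H × (Fin (n - 2 * m - 1) → Multiplicative (ZMod p)))) := by
  have h := SM_hyp hp hG hnab habCard habElem hZexp
  rw [SM_iff hp h habCard habElem]
  constructor
  · intro hc
    obtain ⟨H, iH, m, k, hm, hn, hH, hE, hcard, ⟨e⟩⟩ := SM_decomp hp h hG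
    by_cases hm2 : 2 ≤ m
    · refine Or.inr (Or.inr ⟨H, iH, m, hm2, hE, hcard, ?_⟩)
      rw [show n - 2 * m - 1 = k by omega]
      exact ⟨e⟩
    · have hm1 : m = 1 := by omega
      subst hm1
      have hk : n - 3 = k := by omega
      rw [hk]
      let φ : G →* H := (MonoidHom.fst H _).comp e.toMonoidHom
      have hφ : Function.Surjective φ := by
        intro x
        exact ⟨e.symm (x, 1), by simp [φ]⟩
      rcases hp.eq_two_or_odd' with h2 | hodd
      · subst h2
        left
        refine ⟨rfl, ?_⟩
        by_cases hq : ∀ w : H, w ∉ Subgroup.center H → w ^ 2 ≠ 1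
        · obtain ⟨e2⟩ := SM_Q8 hH hcard hq
          exact ⟨e.trans (MulEquiv.prodCongr e2.symm (MulEquiv.refl _))⟩
        · push Not at hq
          exact absurd hc (SM_D8 φ hφ hH hcard hq)
      · right; left
        refine ⟨hodd, H, iH, SM_isE hp hH hE hcard ?_, ⟨e⟩⟩
        by_contra hq
        push Not at hq
        exact SM_heis hp hodd φ hφ hH hcard hq hc
  · rintro (⟨rfl, ⟨e⟩⟩ | ⟨hodd, E, iE, hE, ⟨e⟩⟩ | ⟨H, iH, m, hm, hE, hcard, ⟨e⟩⟩)
    · exact SM_caseQ h e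
    · apply SM_caseE hp hodd h
      by_contra hq
      push Not at hq
      have h1 : Monoid.exponent E ∣ p := by
        apply Monoid.exponent_dvd_of_forall_pow_eq_one
        intro x
        have h2 : e (e.symm (x, 1) ^ p) = 1 := by rw [hq, map_one]
        rw [map_pow, e.apply_symm_apply] at h2
        exact congrArg Prod.fst h2
      rw [hE.2.2] at h1
      have h3 := Nat.le_of_dvd hp.pos h1
      have h4 := hp.two_le
      nlinarith
    · refine SM_big hp h hm hE hcard ((MonoidHom.fst H _).comp e.toMonoidHom) ?_
      intro x
      exact ⟨e.symm (x, 1), by simp⟩
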